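/- arXiv:1511.01937 — 2 statements merged into one kernel-verified Lean document; each statement's English description precedes it below -/
import Mathlib

section
/- Let f : D → {0,1} be a partial function with D ⊆ [M]^n, and let f_CS be the cheat sheet version of f built from a certifying function for f with c = 10·log₂ n copies of f. Then Q(f_CS) = Ω(Q(f)). -/
open scoped BigOperators ENNReal

namespace QC

/-! ### Inputs and partial functions -/

/-- An input assigns to each index `i` a symbol from the alphabet `Fin (α i)`. -/
abbrev Input (ι : Type) (α : ι → ℕ) := ∀ i : ι, Fin (α i)

/-- A (possibly partial) Boolean-valued query function; `none` means the input
is outside the promise/domain. -/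
abbrev PartialFn (ι : Type) (α : ι → ℕ) := Input ι α → Option Bool

/-- A total function has every input in its domain. -/
def TotalFn {ι : Type} {α : ι → ℕ} (f : PartialFn ι α) : Prop := ∀ x, f x ≠ none

/-- Classical truth value of a proposition, as a `Bool`. -/
noncomputable def ofProp (P : Prop) : Bool := @decide P (Classical.propDecidable P)

/-! ### Decision trees and classical query complexity -/

/-- Decision trees over index set `ι` with alphabets `α` and leaf labels `L`. -/
inductive DTree (ι : Type) (α : ι → ℕ) (L : Type) : Type
  | leaf : L → DTree ι α L
  | node : (i : ι) → (Fin (α i) → DTree ι α L) → DTree ι α L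

namespace DTree

variable {ι : Type} {α : ι → ℕ} {L : Type}

/-- Evaluate a decision tree on an input. -/
def eval : DTree ι α L → Input ι α → L
  | leaf b, _ => b
  | node i child, x => eval (child (x i)) x

/-- The number of queries the tree makes on a given input. -/
def cost : DTree ι α L → Input ι α → ℕ
  | leaf _, _ => 0
  | node i child, x => cost (child (x i)) x + 1

/-- The depth (worst-case number of queries) of a decision tree. -/
def depth : DTree ι α L → ℕ
  | leaf _ => 0
  | node _ child => (Finset.univ.sup fun a => depth (child a)) + 1

end DTree

variable {ι : Type} {α : ι → ℕ}

/-- Deterministic query complexity `D(f)`. -/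
noncomputable def Dq (f : PartialFn ι α) : ℕ :=
  sInf {d | ∃ T : DTree ι α (Option Bool), T.depth ≤ d ∧
    ∀ x b, f x = some b → T.eval x = some b}

/-- Bounded-error randomized query complexity `R(f)` (worst-case queries,
success probability at least 2/3 on every domain input). -/
noncomputable def Rq (f : PartialFn ι α) : ℕ :=
  sInf {d | ∃ μ : PMF (DTree ι α (Option Bool)),
    (∀ T ∈ μ.support, T.depth ≤ d) ∧
    ∀ x b, f x = some b → 2/3 ≤ μ.toOuterMeasure {T | T.eval x = some b}}

/-- Zero-error randomized query complexity `R₀(f)` (worst-case queries): the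
algorithm never errs, and outputs `none` ("don't know") with probability at most 1/2. -/
noncomputable def R0q (f : PartialFn ι α) : ℕ :=
  sInf {d | ∃ μ : PMF (DTree ι α (Option Bool)),
    (∀ T ∈ μ.support, T.depth ≤ d) ∧
    (∀ T ∈ μ.support, ∀ x b, f x = some b → T.eval x = some b ∨ T.eval x = none) ∧
    ∀ x b, f x = some b → μ.toOuterMeasure {T | T.eval x = none} ≤ 1/2}

/-- Zero-error randomized query complexity, measured by the worst-case *expected*
number of queries over domain inputs (value in `ℝ≥0∞`). -/
noncomputable def R0expq (f : PartialFn ι α) : ℝ≥0∞ :=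
  sInf {c | ∃ μ : PMF (DTree ι α (Option Bool)),
    (∀ T ∈ μ.support, ∀ x b, f x = some b → T.eval x = some b ∨ T.eval x = none) ∧
    (∀ x b, f x = some b → μ.toOuterMeasure {T | T.eval x = none} ≤ 1/2) ∧
    (∀ x b, f x = some b → ∑' T, μ T * (T.cost x : ℝ≥0∞) ≤ c)}

/-- One-sided-error randomized query complexity `R₁(f)`: accept every 1-input with
probability at least 2/3, and never accept a 0-input. -/
noncomputable def R1q (f : PartialFn ι α) : ℕ :=
  sInf {d | ∃ μ : PMF (DTree ι α (Option Bool)),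
    (∀ T ∈ μ.support, T.depth ≤ d) ∧
    (∀ x, f x = some true → 2/3 ≤ μ.toOuterMeasure {T | T.eval x = some true}) ∧
    (∀ x, f x = some false → ∀ T ∈ μ.support, T.eval x ≠ some true)}

/-! ### Quantum query complexity -/

/-- The index set of the state space of a quantum query algorithm:
a query register `Σ i, Fin (α i)` together with a workspace register `Fin W`. -/
abbrev QIdx (ι : Type) (α : ι → ℕ) (W : ℕ) := (Σ i : ι, Fin (α i)) × Fin W

variable [Fintype ι] [DecidableEq ι]

/-- The standard query oracle for input `x`: the permutation matrix sending the basis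
vector `|i,a⟩|w⟩` to `|i, a + x i⟩|w⟩` (addition modulo `α i`). -/
noncomputable def oracleMatrix (W : ℕ) (x : Input ι α) :
    Matrix (QIdx ι α W) (QIdx ι α W) ℂ :=
  Matrix.of fun j j' =>
    if j.2 = j'.2 ∧ j.1 = ⟨j'.1.1, j'.1.2 + x j'.1.1⟩ then 1 else 0

/-- The product `U_T · O · U_{T-1} · O ⋯ O · U_0` of unitaries interleaved with oracle
calls, defining a `T`-query quantum algorithm. -/
noncomputable def qProd {τ : Type} [Fintype τ] (U : ℕ → Matrix τ τ ℂ) (Ox : Matrix τ τ ℂ) :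
    ℕ → Matrix τ τ ℂ
  | 0 => U 0
  | t + 1 => U (t + 1) * Ox * qProd U Ox t

/-- A quantum query algorithm: a number `T` of queries, a workspace size `W`,
unitaries `U 0, …, U T`, a unit initial state, and a measurement assigning to each
basis state an output in `Option Bool` (`none` = "don't know"). -/
structure QAlg (ι : Type) [Fintype ι] [DecidableEq ι] (α : ι → ℕ) where
  T : ℕ
  W : ℕ
  U : ℕ → Matrix (QIdx ι α W) (QIdx ι α W) ℂ
  unitary : ∀ t, U t ∈ Matrix.unitaryGroup (QIdx ι α W) ℂ
  init : QIdx ι α W → ℂ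
  init_norm : ∑ j, ‖init j‖ ^ 2 = 1
  out : QIdx ι α W → Option Bool

/-- The final state of a quantum algorithm on input `x`. -/
noncomputable def QAlg.finalState (A : QAlg ι α) (x : Input ι α) : QIdx ι α A.W → ℂ :=
  (qProd A.U (oracleMatrix A.W x) A.T).mulVec A.init

/-- The probability that the algorithm outputs `v` on input `x`. -/
noncomputable def QAlg.outProb (A : QAlg ι α) (x : Input ι α) (v : Option Bool) : ℝ :=
  ∑ j, if A.out j = v then ‖A.finalState x j‖ ^ 2 else 0

/-- Bounded-error quantum query complexity `Q(f)`. -/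
noncomputable def Qq (f : PartialFn ι α) : ℕ :=
  sInf {d | ∃ A : QAlg ι α, A.T ≤ d ∧
    ∀ x b, f x = some b → (2 : ℝ)/3 ≤ A.outProb x (some b)}

/-- Exact quantum query complexity `Q_E(f)`. -/
noncomputable def QEq (f : PartialFn ι α) : ℕ :=
  sInf {d | ∃ A : QAlg ι α, A.T ≤ d ∧
    ∀ x b, f x = some b → A.outProb x (some b) = 1}

/-- One-sided-error quantum query complexity `Q₁(f)`. -/
noncomputable def Q1q (f : PartialFn ι α) : ℕ :=
  sInf {d | ∃ A : QAlg ι α, A.T ≤ d ∧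
    (∀ x, f x = some true → (2 : ℝ)/3 ≤ A.outProb x (some true)) ∧
    (∀ x, f x = some false → A.outProb x (some true) = 0)}

/-- Zero-error quantum query complexity `Q₀(f)`: never wrong, outputs `none`
with probability at most 1/2. -/
noncomputable def Q0q (f : PartialFn ι α) : ℕ :=
  sInf {d | ∃ A : QAlg ι α, A.T ≤ d ∧
    ∀ x b, f x = some b → A.outProb x (some !b) = 0 ∧ A.outProb x none ≤ 1/2}

/-! ### Certificate complexity -/

/-- A partial assignment `ρ` is consistent with an input `x`. -/
def Consistent (ρ : ∀ i : ι, Option (Fin (α i))) (x : Input ι α) : Prop :=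
  ∀ i v, ρ i = some v → x i = v

/-- The number of fixed positions of a partial assignment. -/
noncomputable def certSize (ρ : ∀ i : ι, Option (Fin (α i))) : ℕ :=
  Nat.card {i // (ρ i).isSome}

/-- The certificate complexity of `f` at input `x`: the least size of a partial
assignment consistent with `x` forcing the value `f x` on all domain inputs. -/
noncomputable def CxAt (f : PartialFn ι α) (x : Input ι α) : ℕ :=
  sInf {s | ∃ ρ, Consistent ρ x ∧ (∀ y, Consistent ρ y → f y = none ∨ f y = f x) ∧
    certSize ρ ≤ s}

/-- Certificate complexity `C(f)`. -/
noncomputable def Cq (f : PartialFn ι α) : ℕ :=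
  sSup {s | ∃ x, f x ≠ none ∧ s = CxAt f x}

/-- One-certificate complexity `C¹(f)`. -/
noncomputable def C1q (f : PartialFn ι α) : ℕ :=
  sSup {s | ∃ x, f x = some true ∧ s = CxAt f x}

/-! ### Polynomial degree -/

/-- Exact polynomial degree `deg(f)`: least degree of a real polynomial agreeing
with `f` (as a 0/1 function of the numerical values of the input symbols) on its domain. -/
noncomputable def degq (f : PartialFn ι α) : ℕ :=
  sInf {d | ∃ p : MvPolynomial ι ℝ, p.totalDegree ≤ d ∧
    ∀ x b, f x = some b →
      MvPolynomial.eval (fun i => ((x i : ℕ) : ℝ)) p = if b then 1 else 0}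

/-- Approximate polynomial degree `adeg(f)`: least degree of a real polynomial
approximating `f` pointwise to error 1/3 on its domain. -/
noncomputable def adegq (f : PartialFn ι α) : ℕ :=
  sInf {d | ∃ p : MvPolynomial ι ℝ, p.totalDegree ≤ d ∧
    ∀ x b, f x = some b →
      |MvPolynomial.eval (fun i => ((x i : ℕ) : ℝ)) p - if b then 1 else 0| ≤ 1/3}

end QC
/-! ### Certifying functions and cheat sheets -/

namespace QC

variable {ι : Type} {α : ι → ℕ}

/-- `φ` is a certifying function for the partial function `f`: it accepts `(x, y)`
only when `x` is in the domain of `f` and the first bit of `y` equals `f x`; every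
domain input has some accepted certificate `y`; and the all-zeros `y` is never accepted. -/
def IsCertifying {k : ℕ} (hk : 0 < k) (f : PartialFn ι α)
    (φ : Input ι α → (Fin k → Fin 2) → Bool) : Prop :=
  (∀ x y, f x = none → φ x y = false) ∧
  (∀ x y b, f x = some b → y ⟨0, hk⟩ ≠ (if b then 1 else 0) → φ x y = false) ∧
  (∀ x b, f x = some b → ∃ y, φ x y = true) ∧
  (∀ x, φ x (fun _ => 0) = false)

/-- The index set of the input to a certifying function, viewed as a query function:
the original input together with `k` certificate bits. -/
abbrev CertIdx (ι : Type) (k : ℕ) := ι ⊕ Fin k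

/-- Alphabets for `CertIdx`. -/
def certAlphabet (α : ι → ℕ) (k : ℕ) : CertIdx ι k → ℕ := Sum.elim α fun _ => 2

/-- A certifying function viewed as a total query function on input ⊕ certificate bits. -/
def certFn {k : ℕ} (φ : Input ι α → (Fin k → Fin 2) → Bool) :
    PartialFn (CertIdx ι k) (certAlphabet α k) :=
  fun z => some (φ (fun i => z (Sum.inl i)) (fun q => z (Sum.inr q)))

/-- The index set of the input to the cheat sheet version of a function: `c` copies of
the original input, followed by `2^c` cells each holding `c` certificate strings of `k` bits. -/
abbrev CSIdx (ι : Type) (c k : ℕ) := (Fin c × ι) ⊕ (Fin (2 ^ c) × Fin c × Fin k)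

/-- Alphabets for `CSIdx`. -/
def csAlphabet (α : ι → ℕ) (c k : ℕ) : CSIdx ι c k → ℕ :=
  Sum.elim (fun p => α p.2) fun _ => 2

/-- The `i`-th copy of the original input inside a cheat sheet input. -/
def csX {c k : ℕ} (z : Input (CSIdx ι c k) (csAlphabet α c k)) (i : Fin c) : Input ι α :=
  fun p => z (Sum.inl (i, p))

/-- The `i`-th certificate string in the `ℓ`-th cheat sheet cell. -/
def csY {c k : ℕ} (z : Input (CSIdx ι c k) (csAlphabet α c k)) (ℓ : Fin (2 ^ c))
    (i : Fin c) : Fin k → Fin 2 :=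
  fun q => z (Sum.inr (ℓ, i, q))

/-- The number in `[2^c]` whose binary representation is the bit string `b`. -/
def binToFin (c : ℕ) (b : Fin c → Bool) : Fin (2 ^ c) :=
  ⟨(∑ i, if b i then 2 ^ (i : ℕ) else 0) % 2 ^ c, Nat.mod_lt _ (by positivity)⟩

/-- The defining condition of the cheat sheet function: all `c` copies lie in the
domain of `f`, and the cell addressed by their `f`-values holds certificates
accepted by `φ` for each copy. -/
def CSCond {c k : ℕ} (f : PartialFn ι α) (φ : Input ι α → (Fin k → Fin 2) → Bool)
    (z : Input (CSIdx ι c k) (csAlphabet α c k)) : Prop :=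
  ∃ bvec : Fin c → Bool, (∀ i, f (csX z i) = some (bvec i)) ∧
    ∀ i, φ (csX z i) (csY z (binToFin c bvec) i) = true

/-- The cheat sheet version of `f` with respect to the certifying function `φ`,
with `c` copies of `f`. It is a total function. -/
noncomputable def cheatSheet (c : ℕ) {k : ℕ} (f : PartialFn ι α)
    (φ : Input ι α → (Fin k → Fin 2) → Bool) :
    PartialFn (CSIdx ι c k) (csAlphabet α c k) :=
  fun z => some (ofProp (CSCond f φ z))

/-! ### OR / AND compositions -/

/-- The `OR` function on `m` bits (alphabet `Fin 2`). -/
def orFn (m : ℕ) (z : Fin m → Fin 2) : Fin 2 := if ∃ j, z j = 1 then 1 else 0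

/-- The `AND` function on `m` bits (alphabet `Fin 2`). -/
def andFn (m : ℕ) (z : Fin m → Fin 2) : Fin 2 := if ∀ j, z j = 1 then 1 else 0

/-- The composition `f ∘ OR_m`. -/
def composeOr {n : ℕ} (f : PartialFn (Fin n) fun _ => 2) (m : ℕ) :
    PartialFn (Fin n × Fin m) (fun _ => 2) :=
  fun z => f fun i => orFn m fun j => z (i, j)

/-- The composition `f ∘ AND_m ∘ OR_m`. -/
def composeAndOr {n : ℕ} (f : PartialFn (Fin n) fun _ => 2) (m : ℕ) :
    PartialFn (Fin n × Fin m × Fin m) (fun _ => 2) :=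
  fun z => f fun i => andFn m fun j => orFn m fun l => z (i, j, l)

/-! ### k-SUM, Block k-sum, BKK and its recursive composition -/

/-- The `k`-SUM function on `n` numbers from `[q]`: is there a set of `k` of the
input numbers summing to `0` modulo `q`? -/
noncomputable def kSUMfn (n q k : ℕ) : PartialFn (Fin n) (fun _ => q) :=
  fun x => some (ofProp (∃ S : Finset (Fin n), S.card = k ∧
    (∑ i ∈ S, (x i : ℕ)) % q = 0))

/-- Number of ones in a block of bits. -/
def onesCount {B : ℕ} (z : Fin B → Fin 2) : ℕ := (Finset.univ.filter fun j => z j = 1).card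

/-- The number encoded in binary by a block of bits. -/
def blockVal {B : ℕ} (z : Fin B → Fin 2) : ℕ := ∑ j, if z j = 1 then 2 ^ (j : ℕ) else 0

/-- A block is balanced if it has an equal number of 0s and 1s. -/
def isBalanced {B : ℕ} (z : Fin B → Fin 2) : Prop := 2 * onesCount z = B

/-- Block `k`-sum on `nb` blocks of `B` bits each: value 1 iff there are `k` balanced
blocks whose encoded numbers sum to 0 (mod `2^B`) and every other block has at least
as many 1s as 0s. -/
noncomputable def blockKSumBool (nb B k : ℕ) (z : Fin nb × Fin B → Fin 2) : Bool :=
  ofProp (∃ S : Finset (Fin nb), S.card = k ∧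
    (∀ i ∈ S, isBalanced fun j => z (i, j)) ∧
    (∑ i ∈ S, blockVal fun j => z (i, j)) % 2 ^ B = 0 ∧
    ∀ i ∉ S, B ≤ 2 * onesCount fun j => z (i, j))

/-- The Boolean version of `k`-SUM on `m` numbers of `w` bits each (mod `2^w`). -/
noncomputable def kSumBool (m w k : ℕ) (z : Fin m × Fin w → Fin 2) : Bool :=
  ofProp (∃ S : Finset (Fin m), S.card = k ∧
    (∑ i ∈ S, blockVal fun j => z (i, j)) % 2 ^ w = 0)

/-- Block size of the outer Block `k`-sum in `BKK` on (roughly) `n` outer bits. -/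
def bkkB (n k : ℕ) : ℕ := 10 * k * Nat.log 2 n
/-- Number of blocks of the outer Block `k`-sum in `BKK`. -/
def bkkNB (n k : ℕ) : ℕ := n / bkkB n k
/-- Bits per number of the inner Boolean `k`-SUM in `BKK`. -/
def bkkW (n k : ℕ) : ℕ := k * Nat.log 2 n
/-- Number of numbers of the inner Boolean `k`-SUM in `BKK`. -/
def bkkM (n k : ℕ) : ℕ := n / bkkW n k

/-- The index set of the inputs of `BKK_{n²,k}` (one inner `k`-SUM input bit for
each outer Block `k`-sum input bit; roughly `n²` bits in total). -/
abbrev BKKIdx (n k : ℕ) := (Fin (bkkNB n k) × Fin (bkkB n k)) × (Fin (bkkM n k) × Fin (bkkW n k))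

/-- `BKK_{n²,k}`: Block `k`-sum composed with the Boolean version of `k`-SUM. -/
noncomputable def bkkBool (n k : ℕ) (z : BKKIdx n k → Fin 2) : Bool :=
  blockKSumBool (bkkNB n k) (bkkB n k) k fun ob =>
    if kSumBool (bkkM n k) (bkkW n k) k (fun p => z (ob, p)) then 1 else 0

/-- `BKK_{n²,k}` as a total query function. -/
noncomputable def BKKfn (n k : ℕ) : PartialFn (BKKIdx n k) (fun _ => 2) :=
  fun z => some (bkkBool n k z)

/-- The `d`-fold self-composition of a total Boolean function `g`: a depth-`d` tree
each of whose internal nodes is a copy of `g`; input bits are indexed by root-to-leaf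
paths `Fin d → I`. -/
noncomputable def iterFn {I : Type} (g : (I → Fin 2) → Bool) :
    (d : ℕ) → ((Fin d → I) → Fin 2) → Bool
  | 0, z => decide (z (fun i => i.elim0) = 1)
  | d + 1, z => g fun a => if iterFn g d (fun v => z (Fin.cons a v)) then 1 else 0

/-- The recursion depth used for `RecBKK`: `d = (4/25)·log n / log log n`. -/
def recD (n : ℕ) : ℕ := 4 * Nat.log 2 n / (25 * Nat.log 2 (Nat.log 2 n))

/-- The index set of the inputs of `RecBKK`. -/
abbrev RecIdx (n : ℕ) := Fin (recD n) → BKKIdx n (Nat.log 2 n)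

/-- `RecBKK`: the `recD n`-fold self-composition of `BKK` with `k = log n`. -/
noncomputable def RecBKKfn (n : ℕ) : PartialFn (RecIdx n) (fun _ => 2) :=
  fun z => some (iterFn (bkkBool n (Nat.log 2 n)) (recD n) z)

/-- The nominal input size `N = n^{2d}` of `RecBKK`. -/
def recN (n : ℕ) : ℕ := n ^ (2 * recD n)

end QC

/-!
A positive solution of cost `a` of the dual adversary program of `f` yields a quantum algorithm with
`O(a)` queries. It determines two reflections such that a fixed start vector is close to an
invariant vector of the product `V` of their alternation with the oracle when `f x` is true, and
lies in the range of `V - 1` when `f x` is false; the average of the powers of `V` on the start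
vector is therefore long in the first case and short in the second.

If there is no solution of cost `a`, then separation of convex sets provides a positive semidefinite
kernel `K` on the domain of `f` and a unit vector `δ` with `⟨δ, K δ⟩ = 1`, such that the quadratic
form of `K` is at least `5 / 4` on unit vectors supported on the inputs with one value of `f`, and
such that a query changes the quadratic form of `K` at the states of an algorithm at most by the
factor `1 + O(1 / a)`. On `c` independent inputs the `c`-fold tensor power of `K` grows to
`(5 / 4) ^ c` once the states locate the bit string of all `c` values of `f`, while each query still
contributes only one factor `1 + O(1 / a)`.

An algorithm for the cheat sheet function has to tell a blank cheat sheet from the one in which the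
addressed cell holds valid certificates. By the hybrid argument it puts weight `Ω(1 / T ^ 2)` on
queries of this cell while it runs on the blank cheat sheet, so a query to the cell reveals all `c`
values. Hence `(5 / 4) ^ c ≤ O(T ^ 2) * (1 + O(1 / a)) ^ T`. For `a` of order `T` the last factor is
bounded, so `T < n / 40` contradicts `c ≥ 10 * log n`, whereas for `T ≥ n / 40` the trivial solution
of cost `n` has cost `O(T)`.
-/

namespace QC

open Matrix

local notation "‖" v "‖₂" => ‖(WithLp.toLp 2 v : EuclideanSpace ℂ _)‖

/-! ### Unitary matrices and query algorithms -/

section Unitary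

variable {τ : Type*} [Fintype τ]

theorem sum_norm_sq_eq (v : τ → ℂ) : ∑ j, ‖v j‖ ^ 2 = ‖v‖₂ ^ 2 := by
  simp [EuclideanSpace.norm_sq_eq]

theorem star_dotProduct_self (v : τ → ℂ) : star v ⬝ᵥ v = ((‖v‖₂ ^ 2 : ℝ) : ℂ) := by
  simp [← sum_norm_sq_eq, dotProduct, Complex.conj_mul']

variable [DecidableEq τ] {U : Matrix τ τ ℂ}

theorem star_mulVec_dotProduct_mulVec (hU : U ∈ unitaryGroup τ ℂ) (u v : τ → ℂ) :
    star (U *ᵥ u) ⬝ᵥ U *ᵥ v = star u ⬝ᵥ v := by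
  rw [star_mulVec, dotProduct_mulVec, vecMul_vecMul, ← star_eq_conjTranspose,
    mem_unitaryGroup_iff'.1 hU, vecMul_one]

theorem norm_mulVec (hU : U ∈ unitaryGroup τ ℂ) (v : τ → ℂ) : ‖U *ᵥ v‖₂ = ‖v‖₂ := by
  rw [← sq_eq_sq₀ (norm_nonneg _) (norm_nonneg _)]
  have h := star_mulVec_dotProduct_mulVec hU v v
  simp only [star_dotProduct_self] at h
  exact_mod_cast h

theorem permMatrix_mem_unitaryGroup (σ : Equiv.Perm τ) : σ.permMatrix ℂ ∈ unitaryGroup τ ℂ := by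
  rw [mem_unitaryGroup_iff, star_eq_conjTranspose, conjTranspose_permMatrix, ← permMatrix_mul,
    inv_mul_cancel, permMatrix_one]

theorem qProd_mem_unitaryGroup {τ : Type} [Fintype τ] [DecidableEq τ] {U : ℕ → Matrix τ τ ℂ}
    (hU : ∀ t, U t ∈ unitaryGroup τ ℂ) {O : Matrix τ τ ℂ} (hO : O ∈ unitaryGroup τ ℂ) :
    ∀ t, qProd U O t ∈ unitaryGroup τ ℂ
  | 0 => hU 0
  | t + 1 => mul_mem (mul_mem (hU _) hO) (qProd_mem_unitaryGroup hU hO t)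

theorem qProd_submatrix_equiv {σ τ : Type} [Fintype σ] [Fintype τ] (e : σ ≃ τ)
    (U : ℕ → Matrix τ τ ℂ) (O : Matrix τ τ ℂ) (t : ℕ) :
    qProd (fun t => (U t).submatrix e e) (O.submatrix e e) t = (qProd U O t).submatrix e e := by
  induction t with
  | zero => rfl
  | succ t ih => rw [qProd, qProd, ih, submatrix_mul_equiv, submatrix_mul_equiv]

end Unitary

section Oracle

variable {ι : Type} {α : ι → ℕ}

/-- The permutation of the basis states which subtracts, modulo `α i`, the symbol `x i` from the
query register. Permuting the coordinates of a state vector by it adds that symbol, so that it is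
the effect of a query. -/
def oraclePerm (ω : Type*) (x : Input ι α) : Equiv.Perm ((Σ i : ι, Fin (α i)) × ω) where
  toFun j := (⟨j.1.1, j.1.2 - x j.1.1⟩, j.2)
  invFun j := (⟨j.1.1, j.1.2 + x j.1.1⟩, j.2)
  left_inv := by
    rintro ⟨⟨i, a⟩, w⟩
    have := NeZero.of_pos a.pos
    simp
  right_inv := by
    rintro ⟨⟨i, a⟩, w⟩
    have := NeZero.of_pos a.pos
    simp

@[simp]
theorem oraclePerm_symm_apply {ω : Type*} (x : Input ι α) (i : ι) (a : Fin (α i)) (w : ω) :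
    (oraclePerm ω x).symm (⟨i, a⟩, w) = (⟨i, a + x i⟩, w) := rfl

variable [DecidableEq ι]

theorem oracleMatrix_eq_permMatrix (W : ℕ) (x : Input ι α) :
    oracleMatrix W x = (oraclePerm (Fin W) x).permMatrix ℂ := by
  ext j ⟨⟨i, a⟩, w⟩
  simp [oracleMatrix, Equiv.Perm.permMatrix, PEquiv.toMatrix_apply, Equiv.toPEquiv_apply,
    ← Equiv.eq_symm_apply, Prod.ext_iff, and_comm]

variable [Fintype ι]

theorem oracleMatrix_mem_unitaryGroup (W : ℕ) (x : Input ι α) :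
    oracleMatrix W x ∈ unitaryGroup (QIdx ι α W) ℂ :=
  oracleMatrix_eq_permMatrix W x ▸ permMatrix_mem_unitaryGroup _

/-- The algorithm `A` computes the partial function `f` with bounded error. -/
def QAlg.Computes (A : QAlg ι α) (f : PartialFn ι α) : Prop :=
  ∀ x b, f x = some b → (2 : ℝ) / 3 ≤ A.outProb x (some b)

theorem QAlg.Computes.Qq_le {A : QAlg ι α} {f : PartialFn ι α} (h : A.Computes f) :
    Qq f ≤ A.T :=
  Nat.sInf_le ⟨A, le_rfl, h⟩

theorem QAlg.Computes.exists_T_eq_Qq {A : QAlg ι α} {f : PartialFn ι α} (h : A.Computes f) :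
    ∃ B : QAlg ι α, B.T = Qq f ∧ B.Computes f := by
  obtain ⟨B, hle, hB⟩ := Nat.sInf_mem (s := {d | ∃ A : QAlg ι α, A.T ≤ d ∧ A.Computes f})
    ⟨_, A, le_rfl, h⟩
  exact ⟨B, hle.antisymm (Nat.sInf_le ⟨B, le_rfl, hB⟩), hB⟩

theorem exists_qAlg_of_equiv {J : Type} [Fintype J] [DecidableEq J] {W : ℕ} (e : QIdx ι α W ≃ J)
    {O : Input ι α → Matrix J J ℂ}
    (hO : ∀ x, O x = (e.permCongr (oraclePerm (Fin W) x)).permMatrix ℂ) (T : ℕ)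
    {U : ℕ → Matrix J J ℂ} (hU : ∀ t, U t ∈ unitaryGroup J ℂ) {init : J → ℂ}
    (hinit : ‖init‖₂ = 1) (out : J → Bool) :
    ∃ A : QAlg ι α, A.T = T ∧ ∀ x b, A.outProb x (some b) =
      ∑ j, if out j = b then ‖(qProd U (O x) T *ᵥ init) j‖ ^ 2 else 0 := by
  have hOe (x : Input ι α) : oracleMatrix W x = (O x).submatrix e e := by
    ext i j
    simp [hO, oracleMatrix_eq_permMatrix, Equiv.Perm.permMatrix, PEquiv.toMatrix_apply,
      Equiv.toPEquiv_apply]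
  refine ⟨⟨T, W, fun t => (U t).submatrix e e, fun t => ?_, init ∘ e, ?_,
    fun j => some (out (e j))⟩, rfl, fun x b => ?_⟩
  · rw [mem_unitaryGroup_iff, star_eq_conjTranspose, conjTranspose_submatrix, submatrix_mul_equiv,
      ← star_eq_conjTranspose, mem_unitaryGroup_iff.1 (hU t), submatrix_one_equiv]
  · exact (e.sum_comp fun j => ‖init j‖ ^ 2).trans (by rw [sum_norm_sq_eq, hinit, one_pow])
  · refine Eq.trans ?_ (e.sum_comp _)
    simp only [QAlg.outProb, QAlg.finalState, hOe, qProd_submatrix_equiv, submatrix_mulVec_equiv,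
      Function.comp_assoc, Equiv.self_comp_symm, Function.comp_id, Function.comp_apply,
      Option.some.injEq]

end Oracle

/-! ### Phase estimation of a product of two reflections -/

section Reflection

variable {H : Type*} [Fintype H] [DecidableEq H]

theorem exists_mem_unitaryGroup_toLp_mulVec (e : EuclideanSpace ℂ H ≃ₗᵢ[ℂ] EuclideanSpace ℂ H) :
    ∃ U ∈ unitaryGroup H ℂ, ∀ v, WithLp.toLp 2 (U *ᵥ v) = e (WithLp.toLp 2 v) := by
  let E := Unitary.linearIsometryEquiv.symm e
  refine ⟨(toEuclideanCLM (𝕜 := ℂ)).symm E,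
    (Unitary.map_mem (toEuclideanCLM (𝕜 := ℂ) (n := H)).symm E.2), fun v => ?_⟩
  rw [← toEuclideanCLM_toLp, StarAlgEquiv.apply_symm_apply]
  rfl

theorem exists_reflection (S : Set (H → ℂ)) :
    ∃ R ∈ unitaryGroup H ℂ, (∀ v ∈ S, R *ᵥ v = -v) ∧
      ∀ u, (∀ v ∈ S, star v ⬝ᵥ u = 0) → R *ᵥ u = u := by
  let V : Submodule ℂ (EuclideanSpace ℂ H) := Submodule.span ℂ (WithLp.toLp 2 '' S)
  obtain ⟨R, hR, hRV⟩ := exists_mem_unitaryGroup_toLp_mulVec Vᗮ.reflection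
  refine ⟨R, hR, fun v hv => WithLp.toLp_injective 2 ?_,
    fun u hu => WithLp.toLp_injective 2 ?_⟩ <;> rw [hRV]
  · rw [Submodule.reflection_mem_subspace_orthogonal_precomplement_eq_neg
      (Submodule.subset_span (Set.mem_image_of_mem _ hv)), WithLp.toLp_neg]
  · have hle : V ≤ (ℂ ∙ (WithLp.toLp 2 u : EuclideanSpace ℂ H))ᗮ := by
      refine Submodule.span_le.2 ?_
      rintro _ ⟨v, hv, rfl⟩
      rw [SetLike.mem_coe, Submodule.mem_orthogonal_singleton_iff_inner_left,
        EuclideanSpace.inner_toLp_toLp, dotProduct_comm]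
      exact hu v hv
    exact Submodule.reflection_mem_subspace_eq_self ((Submodule.mem_orthogonal _ _).2 fun a ha =>
      Submodule.mem_orthogonal_singleton_iff_inner_left.1 (hle ha))

theorem exists_mem_unitaryGroup_row_eq (i : H) {u : H → ℂ} (hreal : star u = u)
    (hu : u ⬝ᵥ u = 1) : ∃ F ∈ unitaryGroup H ℂ, F i = u := by
  let e : H → ℂ := Pi.single i 1
  obtain ⟨R, hR, hneg, hfix⟩ := exists_reflection {e - u}
  have hsub : R *ᵥ (e - u) = -(e - u) := hneg _ rfl
  have hadd : R *ᵥ (e + u) = e + u := by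
    refine hfix _ ?_
    rintro _ rfl
    have he : star e = e := by simp [e, Pi.star_def, Pi.single_apply, apply_ite, funext_iff]
    simp only [star_sub, sub_dotProduct, dotProduct_add, hreal, he, hu, dotProduct_comm u e]
    simp [e]
  have hcol : R *ᵥ e = u := by
    have h2 : (2 : ℂ) • R *ᵥ e = (2 : ℂ) • u := by
      rw [← mulVec_smul, show (2 : ℂ) • e = (e + u) + (e - u) by module, mulVec_add, hadd, hsub]
      module
    exact smul_right_injective _ two_ne_zero h2
  refine ⟨star R, Unitary.star_mem hR, funext fun j => ?_⟩
  rw [star_apply, ← hreal, Pi.star_apply, ← hcol]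
  simp [e]

end Reflection

section Average

variable {H : Type*} [Fintype H] [DecidableEq H] {V : Matrix H H ℂ}

/-- The sum telescopes: the powers of `V` nearly annihilate vectors of the form `v - V v`. -/
theorem norm_sum_pow_mulVec_le (hV : V ∈ unitaryGroup H ℂ) {b v : H → ℂ}
    (h : v - V *ᵥ v = (2 : ℂ) • b) (K : ℕ) : ‖∑ t ∈ Finset.range K, V ^ t *ᵥ b‖₂ ≤ ‖v‖₂ := by
  have hsum : (2 : ℂ) • ∑ t ∈ Finset.range K, V ^ t *ᵥ b = v - V ^ K *ᵥ v := by
    simp_rw [Finset.smul_sum, ← mulVec_smul, ← h, mulVec_sub, mulVec_mulVec, ← pow_succ]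
    simpa using Finset.sum_range_sub' (fun t => V ^ t *ᵥ v) K
  have hle := norm_sub_le (WithLp.toLp 2 v : EuclideanSpace ℂ H) (WithLp.toLp 2 (V ^ K *ᵥ v))
  rw [← WithLp.toLp_sub, ← hsum, WithLp.toLp_smul, norm_smul, Complex.norm_ofNat,
    norm_mulVec (pow_mem hV K)] at hle
  linarith

theorem mul_norm_sub_le_norm_sum_pow_mulVec (hV : V ∈ unitaryGroup H ℂ) {u : H → ℂ}
    (hu : V *ᵥ u = u) (b : H → ℂ) (K : ℕ) :
    K * (‖u‖₂ - ‖u - b‖₂) ≤ ‖∑ t ∈ Finset.range K, V ^ t *ᵥ b‖₂ := by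
  have hfix (t : ℕ) : V ^ t *ᵥ u = u := by
    induction t with
    | zero => simp
    | succ t ih => rw [pow_succ, ← mulVec_mulVec, hu, ih]
  have hsum : (K : ℂ) • u - ∑ t ∈ Finset.range K, V ^ t *ᵥ b =
      ∑ t ∈ Finset.range K, V ^ t *ᵥ (u - b) := by
    simp [mulVec_sub, hfix, Nat.cast_smul_eq_nsmul]
  have hle : ‖∑ t ∈ Finset.range K, V ^ t *ᵥ (u - b)‖₂ ≤ K * ‖u - b‖₂ := by
    rw [WithLp.toLp_sum]
    refine (norm_sum_le _ _).trans_eq ?_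
    simp [norm_mulVec (pow_mem hV _), - WithLp.toLp_sub]
  have htri := norm_sub_norm_le (WithLp.toLp 2 ((K : ℂ) • u) : EuclideanSpace ℂ H)
    (WithLp.toLp 2 (∑ t ∈ Finset.range K, V ^ t *ᵥ b))
  rw [← WithLp.toLp_sub, hsum, WithLp.toLp_smul, norm_smul, Complex.norm_natCast] at htri
  linarith

theorem sq_average_le_third (hV : V ∈ unitaryGroup H ℂ) {b v : H → ℂ}
    (h : v - V *ᵥ v = (2 : ℂ) • b) {K : ℕ} [NeZero K] (hv : 3 * ‖v‖₂ ^ 2 ≤ K ^ 2) :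
    (‖∑ t ∈ Finset.range K, V ^ t *ᵥ b‖₂ / K) ^ 2 ≤ 1 / 3 := by
  have hK : (K : ℝ) ≠ 0 := NeZero.ne _
  rw [div_pow, div_le_iff₀ (by positivity)]
  linarith [pow_le_pow_left₀ (norm_nonneg _) (norm_sum_pow_mulVec_le hV h K) 2]

theorem two_thirds_le_sq_average (hV : V ∈ unitaryGroup H ℂ) {b u : H → ℂ} (hVu : V *ᵥ u = u)
    (hu : 1 ≤ ‖u‖₂) (hub : ‖u - b‖₂ ≤ 1 / 7) (K : ℕ) [NeZero K] :
    2 / 3 ≤ (‖∑ t ∈ Finset.range K, V ^ t *ᵥ b‖₂ / K) ^ 2 := by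
  have hK : (K : ℝ) ≠ 0 := NeZero.ne _
  have h : 6 / 7 ≤ ‖∑ t ∈ Finset.range K, V ^ t *ᵥ b‖₂ / K := by
    rw [le_div_iff₀ (by positivity), mul_comm]
    refine le_trans ?_ (mul_norm_sub_le_norm_sum_pow_mulVec hV hVu b K)
    gcongr
    linarith
  exact le_trans (by norm_num) (pow_le_pow_left₀ (by norm_num) h 2)

end Average

section Counter

open scoped Kronecker

variable {H : Type} [Fintype H] {K : ℕ}

theorem blockDiagonal_mulVec (A : Fin K → Matrix H H ℂ) (v : H × Fin K → ℂ) (h : H) (τ : Fin K) :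
    (blockDiagonal A *ᵥ v) (h, τ) = (A τ *ᵥ fun h => v (h, τ)) h := by
  simp [mulVec, dotProduct, blockDiagonal_apply, Fintype.sum_prod_type]

variable [DecidableEq H]

theorem one_kronecker_mulVec (F : Matrix (Fin K) (Fin K) ℂ) (v : H × Fin K → ℂ) (h : H)
    (τ : Fin K) : (((1 : Matrix H H ℂ) ⊗ₖ F) *ᵥ v) (h, τ) = (F *ᵥ fun τ => v (h, τ)) τ := by
  simp [mulVec, dotProduct, Fintype.sum_prod_type, one_apply, ite_mul]

theorem blockDiagonal_mem_unitaryGroup {A : Fin K → Matrix H H ℂ}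
    (hA : ∀ τ, A τ ∈ unitaryGroup H ℂ) : blockDiagonal A ∈ unitaryGroup (H × Fin K) ℂ := by
  rw [mem_unitaryGroup_iff, star_eq_conjTranspose, blockDiagonal_conjTranspose, ← blockDiagonal_mul]
  simp_rw [← star_eq_conjTranspose, fun τ => mem_unitaryGroup_iff.1 (hA τ)]
  exact blockDiagonal_one

/-- The unitaries of the circuit which applies the round `O * A * O * B` as often as the counter
register `Fin K` says, and `F` at the end. The other of the `K` rounds, in which the queries `O`
must not have any effect, use `N` in place of `A` and `B`, where `O * N * O * N = 1`. -/
noncomputable def roundUnitary (A B N : Matrix H H ℂ) (F : Matrix (H × Fin K) (H × Fin K) ℂ)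
    (t : ℕ) : Matrix (H × Fin K) (H × Fin K) ℂ :=
  if t = 2 * K then F else
    blockDiagonal fun τ : Fin K => if t / 2 < τ then if t % 2 = 0 then B else A else N

variable {A B N O : Matrix H H ℂ}

theorem roundUnitary_mem_unitaryGroup {F : Matrix (H × Fin K) (H × Fin K) ℂ}
    (hA : A ∈ unitaryGroup H ℂ) (hB : B ∈ unitaryGroup H ℂ) (hN : N ∈ unitaryGroup H ℂ)
    (hF : F ∈ unitaryGroup (H × Fin K) ℂ) (t : ℕ) :
    roundUnitary A B N F t ∈ unitaryGroup (H × Fin K) ℂ := by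
  unfold roundUnitary
  split_ifs
  · exact hF
  · exact blockDiagonal_mem_unitaryGroup fun τ => by split_ifs <;> assumption
  · exact blockDiagonal_mem_unitaryGroup fun τ => by split_ifs <;> assumption

theorem qProd_roundUnitary (F : Matrix (H × Fin K) (H × Fin K) ℂ) (hN : O * N * O * N = 1) {s : ℕ}
    (hs : s ≤ K) : qProd (roundUnitary A B N F) (blockDiagonal fun _ => O) (2 * s) =
      roundUnitary A B N F (2 * s) *
        blockDiagonal fun τ : Fin K => (O * A * O * B) ^ min (τ : ℕ) s := by
  induction s with
  | zero => simp [qProd, ← Pi.one_def]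
  | succ s ih =>
    have heven : roundUnitary A B N F (2 * s) =
        blockDiagonal fun τ : Fin K => if s < τ then B else N := by
      simp [roundUnitary, show s ≠ K by lia]
    have hodd : roundUnitary A B N F (2 * s + 1) =
        blockDiagonal fun τ : Fin K => if s < τ then A else N := by
      rw [roundUnitary, if_neg (by lia)]
      simp [Nat.add_mod, show (2 * s + 1) / 2 = s by lia]
    rw [mul_add_one, qProd, qProd, ih (by lia), heven, hodd]
    simp only [mul_assoc, ← blockDiagonal_mul]
    congr 2
    funext τ
    rcases lt_or_ge s τ with hτ | hτ
    · rw [if_pos hτ, if_pos hτ, min_eq_right hτ.le, min_eq_right hτ, pow_succ']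
      simp only [mul_assoc]
    · rw [if_neg hτ.not_gt, if_neg hτ.not_gt, min_eq_left hτ, min_eq_left (by lia)]
      simp only [← mul_assoc, hN, one_mul]

theorem qProd_roundUnitary_mulVec_zero [NeZero K] {F : Matrix (Fin K) (Fin K) ℂ} {c : ℂ}
    (hF : F 0 = fun _ => c) (hN : O * N * O * N = 1) (b : H → ℂ) (h : H) :
    (qProd (roundUnitary A B N (1 ⊗ₖ F)) (blockDiagonal fun _ => O) (2 * K) *ᵥ
      fun j => c * b j.1) (h, 0) =
        c ^ 2 * (∑ t ∈ Finset.range K, (O * A * O * B) ^ t *ᵥ b) h := by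
  rw [qProd_roundUnitary _ hN le_rfl, roundUnitary, if_pos rfl, ← mulVec_mulVec,
    one_kronecker_mulVec, mulVec, dotProduct, hF, Finset.sum_apply,
    ← Fin.sum_univ_eq_sum_range (fun t => ((O * A * O * B) ^ t *ᵥ b) h), Finset.mul_sum]
  refine Finset.sum_congr rfl fun τ _ => ?_
  rw [blockDiagonal_mulVec, min_eq_left τ.2.le, show (fun h => c * b h) = c • b from rfl,
    mulVec_smul, Pi.smul_apply, smul_eq_mul, sq]
  exact (mul_assoc _ _ _).symm

variable {ι : Type} [Fintype ι] [DecidableEq ι] {α : ι → ℕ} {ω : Type} [Fintype ω] [DecidableEq ω]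

theorem exists_unitary_uniform_row (K : ℕ) [NeZero K] :
    ∃ F ∈ unitaryGroup (Fin K) ℂ, F 0 = fun _ => ((√K)⁻¹ : ℂ) := by
  refine exists_mem_unitaryGroup_row_eq 0 (by ext; simp) ?_
  simp [dotProduct, ← mul_inv, ← Complex.ofReal_mul]

/-- The average `(∑ t < K, V ^ t *ᵥ b) / K` is the amplitude of the counter value `0` at the end of
the counter circuit. -/
theorem exists_qAlg_of_rounds
    {A B N : Matrix ((Σ i, Fin (α i)) × ω) ((Σ i, Fin (α i)) × ω) ℂ}
    (hA : A ∈ unitaryGroup _ ℂ) (hB : B ∈ unitaryGroup _ ℂ) (hN : N ∈ unitaryGroup _ ℂ)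
    {O : Input ι α → Matrix ((Σ i, Fin (α i)) × ω) ((Σ i, Fin (α i)) × ω) ℂ}
    (hO : ∀ x, O x = (oraclePerm ω x).permMatrix ℂ) (hON : ∀ x, O x * N * O x * N = 1)
    {b : (Σ i, Fin (α i)) × ω → ℂ} (hb : ‖b‖₂ = 1) (K : ℕ) [NeZero K] :
    ∃ alg : QAlg ι α, alg.T = 2 * K ∧ ∀ x,
      alg.outProb x (some true) =
        (‖∑ t ∈ Finset.range K, (O x * A * O x * B) ^ t *ᵥ b‖₂ / K) ^ 2 ∧
      alg.outProb x (some true) + alg.outProb x (some false) = 1 := by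
  obtain ⟨F, hF, hF0⟩ := exists_unitary_uniform_row K
  let init : ((Σ i, Fin (α i)) × ω) × Fin K → ℂ := fun j => (√K : ℂ)⁻¹ * b j.1
  have hinit : ‖init‖₂ = 1 := by
    rw [← sq_eq_sq₀ (norm_nonneg _) zero_le_one, ← sum_norm_sq_eq, Fintype.sum_prod_type_right]
    simp_rw [init, norm_mul, mul_pow, ← Finset.mul_sum, sum_norm_sq_eq b, hb]
    simp
  let e : QIdx ι α (Fintype.card (ω × Fin K)) ≃ ((Σ i, Fin (α i)) × ω) × Fin K :=
    ((Equiv.refl _).prodCongr (Fintype.equivFin _).symm).trans (Equiv.prodAssoc _ _ _).symm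
  have he (x : Input ι α) : (blockDiagonal fun _ : Fin K => O x) =
      (e.permCongr (oraclePerm (Fin _) x)).permMatrix ℂ := by
    ext ⟨⟨q, w⟩, τ⟩ ⟨⟨q', w'⟩, τ'⟩
    simp [e, hO, blockDiagonal_apply, Equiv.Perm.permMatrix, PEquiv.toMatrix_apply,
      Equiv.toPEquiv_apply, oraclePerm, Prod.ext_iff, ite_and]
    split_ifs <;> rfl
  have hU := roundUnitary_mem_unitaryGroup hA hB hN
    (kronecker_mem_unitary (one_mem (unitaryGroup ((Σ i, Fin (α i)) × ω) ℂ)) hF)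
  obtain ⟨alg, hT, halg⟩ := exists_qAlg_of_equiv e he (2 * K) hU hinit fun j => decide (j.2 = 0)
  refine ⟨alg, hT, fun x => ⟨?_, ?_⟩⟩
  · simp only [halg, decide_eq_true_eq]
    rw [Fintype.sum_prod_type_right, Fintype.sum_eq_single 0 fun τ hτ => by simp [hτ]]
    simp_rw [if_true, init, qProd_roundUnitary_mulVec_zero hF0 (hON x) b, norm_mul, mul_pow,
      ← Finset.mul_sum, sum_norm_sq_eq]
    simp [div_eq_inv_mul, mul_pow]
  · have hfinal : ∑ j, ‖(qProd (roundUnitary A B N (1 ⊗ₖ F)) (blockDiagonal fun _ => O x) (2 * K) *ᵥ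
        init) j‖ ^ 2 = 1 := by
      rw [sum_norm_sq_eq, norm_mulVec (qProd_mem_unitaryGroup hU (he x ▸
        permMatrix_mem_unitaryGroup _) _), hinit, one_pow]
    rw [halg, halg, ← Finset.sum_add_distrib, ← hfinal]
    exact Finset.sum_congr rfl fun j _ => by cases decide (j.2 = 0) <;> simp

end Counter

/-! ### The dual adversary bound -/

section DualFeasible

/-- The entrywise product `K ∘ Δ` of `K` with the matrix `Δ` of the pairs which `s` tells apart; for
the symbol `s` at a position, this is the part of `K` on which a query there makes a difference. -/
def disagreePart {X Y : Type*} [DecidableEq Y] (s : X → Y) (K : Matrix X X ℝ) : Matrix X X ℝ :=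
  of fun x y => if s x = s y then 0 else K x y

variable {ι : Type} {α : ι → ℕ}

/-- The inputs which satisfy the promise of the partial function `f`. -/
abbrev Dom (f : PartialFn ι α) := {x : Input ι α // (f x).isSome}

/-- The value of the partial function `f` on an input in its domain. -/
def value (f : PartialFn ι α) (x : Dom f) : Bool := (f x.1).get x.2

theorem apply_eq_some_value (f : PartialFn ι α) (x : Dom f) : f x.1 = some (value f x) :=
  (Option.some_get x.2).symm

variable [Fintype ι]

/-- The dual adversary semidefinite program of `f` has a solution of cost at most `a`. -/
def DualFeasible (f : PartialFn ι α) (a : ℝ) : Prop :=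
  ∃ P : ι → Matrix (Dom f) (Dom f) ℝ, (∀ i, (P i).PosSemidef) ∧ (∀ x, ∑ i, P i x x ≤ a) ∧
    ∀ x y, value f x ≠ value f y → ∑ i, disagreePart (fun z => z.1 i) (P i) x y = 1

variable {f : PartialFn ι α}

theorem DualFeasible.mono {a a' : ℝ} (h : DualFeasible f a) (ha : a ≤ a') : DualFeasible f a' :=
  let ⟨P, hP, hP1, hP2⟩ := h
  ⟨P, hP, fun x => (hP1 x).trans ha, hP2⟩

/-- The matrices compare the prefixes of the inputs, so that only the first index at which two
inputs differ contributes to their sum. -/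
theorem dualFeasible_card (f : PartialFn ι α) : DualFeasible f (Fintype.card ι) := by
  classical
  let e := Fintype.equivFin ι
  let pre (i : ι) (x : Dom f) (j : {j // e j < e i}) : Fin (α j) := x.1 j
  refine ⟨fun i => (1 : Matrix _ _ ℝ).submatrix (pre i) (pre i),
    fun i => PosSemidef.one.submatrix _, fun x => by simp, fun x y hxy => ?_⟩
  have hne : (Finset.univ.filter fun i => x.1 i ≠ y.1 i).Nonempty := by
    by_contra! h
    refine hxy (congrArg _ (Subtype.ext (funext fun i => ?_)))
    simpa using Finset.filter_eq_empty_iff.1 h (Finset.mem_univ i)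
  obtain ⟨i, hi, hmin⟩ := Finset.exists_min_image _ e hne
  simp only [Finset.mem_filter, Finset.mem_univ, true_and] at hi hmin
  have hpre (j : ι) : pre j x = pre j y ↔ e j ≤ e i :=
    ⟨fun h => not_lt.1 fun hlt => hi (congrFun h ⟨i, hlt⟩),
      fun h => funext fun l => by_contra fun hl => (hmin l hl).not_gt (l.2.trans_le h)⟩
  rw [Fintype.sum_eq_single i]
  · simp [disagreePart, one_apply, hi, hpre]
  · intro j hj
    simp only [disagreePart, of_apply, submatrix_apply, one_apply, hpre]
    split_ifs with h hle
    · rfl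
    · exact absurd (e.injective (hle.antisymm (hmin j h))) hj
    · rfl

open scoped MatrixOrder in
theorem exists_gram_of_posSemidef {X : Type*} [Fintype X] {P : Matrix X X ℝ} (hP : P.PosSemidef) :
    ∃ w : X → X → ℝ, ∀ x y, P x y = ∑ k, w x k * w y k := by
  classical
  obtain ⟨B, rfl⟩ := CStarAlgebra.nonneg_iff_eq_star_mul_self.1 hP.nonneg
  exact ⟨fun x k => B k x, fun x y => by simp [mul_apply, star_eq_conjTranspose]⟩

theorem DualFeasible.exists_vectors [DecidableEq ι] {a : ℝ} (h : DualFeasible f a) :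
    ∃ w : Dom f → ι → Dom f → ℝ, (∀ x, ∑ i, ∑ k, w x i k * w x i k ≤ a) ∧
      ∀ x y, value f x ≠ value f y →
        ∑ i, (if x.1 i = y.1 i then 0 else ∑ k, w x i k * w y i k) = 1 := by
  obtain ⟨P, hP, hP1, hP2⟩ := h
  choose w hw using fun i => exists_gram_of_posSemidef (hP i)
  refine ⟨fun x i => w i x, fun x => ?_, fun x y hxy => ?_⟩
  · simpa only [← hw] using hP1 x
  · simpa only [disagreePart, of_apply, ← hw] using hP2 x y hxy

end DualFeasible

section DualAlgorithm

variable {ι : Type} {α : ι → ℕ} {κ : Type}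

/-- The vector `∑ i, |i⟩ ((α i) ^ (-1/2) ∑ₐ |a⟩ + q |x i⟩) |w i⟩`: its second part stores the input
`x`, and its first part is invariant under queries. -/
noncomputable def symbolVec (q : ℝ) (x : Input ι α) (w : ι → κ → ℝ) :
    (Σ i, Fin (α i)) × Option κ → ℂ
  | (_, none) => 0
  | (⟨i, a⟩, some k) => (((√(α i))⁻¹ + if a = x i then q else 0) * w i k : ℝ)

/-- The unit vector `|i₀⟩` with a uniform symbol, in the idle part `none` of the workspace. It is
invariant under queries, and the algorithm starts from it. -/
noncomputable def idleVec [DecidableEq ι] (α : ι → ℕ) (κ : Type) (i₀ : ι) :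
    (Σ i, Fin (α i)) × Option κ → ℂ
  | (⟨i, _⟩, none) => if i = i₀ then ((√(α i))⁻¹ : ℝ) else 0
  | (_, some _) => 0

/-- The permutation `|i, a⟩|w⟩ ↦ |i, -a⟩|w⟩` of the basis states. Conjugation by it inverts queries,
as an algorithm has access to the oracle but not to its inverse. -/
def negPerm (α : ι → ℕ) (ω : Type*) : Equiv.Perm ((Σ i, Fin (α i)) × ω) :=
  Function.Involutive.toPerm
    (fun j => have := NeZero.of_pos j.1.2.pos; (⟨j.1.1, -j.1.2⟩, j.2)) <| by
      rintro ⟨⟨i, a⟩, w⟩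
      have := NeZero.of_pos a.pos
      simp

/-- The queries `O` before and after `N` undo each other. -/
theorem round_mulVec {H : Type*} [Fintype H] [DecidableEq H] {O N L R : Matrix H H ℂ}
    (hON : O * N * O * N = 1) {v y : H → ℂ} (hL : L *ᵥ v = O *ᵥ y) :
    (O * (R * N) * O * (N * L)) *ᵥ v = O *ᵥ R *ᵥ y := by
  have hNO : N * O * N * O = 1 := by
    rw [mul_assoc, mul_assoc, mul_eq_one_comm, ← hON]
    simp only [mul_assoc]
  calc (O * (R * N) * O * (N * L)) *ᵥ v = (O * (R * N) * O * N) *ᵥ L *ᵥ v := by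
        simp only [mulVec_mulVec, mul_assoc]
    _ = O *ᵥ R *ᵥ (N * O * N * O) *ᵥ y := by rw [hL]; simp only [mulVec_mulVec, mul_assoc]
    _ = O *ᵥ R *ᵥ y := by rw [hNO, one_mulVec]

variable [Fintype ι] [Fintype κ]

section

variable [∀ i, NeZero (α i)]

theorem star_symbolVec_dotProduct_symbolVec (q q' : ℝ) (x y : Input ι α) (w w' : ι → κ → ℝ) :
    star (symbolVec q x w) ⬝ᵥ symbolVec q' y w' =
      ((∑ i, (1 + (√(α i))⁻¹ * (q + q') + if x i = y i then q * q' else 0) *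
        ∑ k, w i k * w' i k : ℝ) : ℂ) := by
  simp only [dotProduct, Fintype.sum_prod_type, Fintype.sum_option, Fintype.sum_sigma, symbolVec,
    Pi.star_apply, RCLike.star_def, Complex.conj_ofReal, mul_zero, zero_add]
  norm_cast
  refine Finset.sum_congr rfl fun i _ => ?_
  have hα : (α i : ℝ) * ((√(α i))⁻¹ * (√(α i))⁻¹) = 1 := by
    rw [← mul_inv, Real.mul_self_sqrt (Nat.cast_nonneg _)]
    simp
  have h : ∑ a : Fin (α i), ((√(α i))⁻¹ + if a = x i then q else 0) *
      ((√(α i))⁻¹ + if a = y i then q' else 0) =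
        1 + (√(α i))⁻¹ * (q + q') + if x i = y i then q * q' else 0 := by
    simp [add_mul, mul_add, Finset.sum_add_distrib, hα, eq_comm (a := y i)]
    ring
  rw [← h, Finset.sum_mul_sum]
  exact Finset.sum_congr rfl fun a _ => Finset.sum_congr rfl fun k _ => by ring

theorem norm_sq_symbolVec_le {q : ℝ} (hq : q ^ 2 = 1) (x : Input ι α) (w : ι → κ → ℝ) :
    ‖symbolVec q x w‖₂ ^ 2 ≤ 4 * ∑ i, ∑ k, w i k * w i k := by
  have h := star_symbolVec_dotProduct_symbolVec q q x x w w
  rw [star_dotProduct_self, Complex.ofReal_inj] at h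
  rw [h, Finset.mul_sum]
  gcongr with i
  · exact Finset.sum_nonneg fun k _ => mul_self_nonneg _
  have hα : (√(α i))⁻¹ ≤ 1 := inv_le_one_of_one_le₀ <| Real.one_le_sqrt.2 <|
    Nat.one_le_cast.2 NeZero.one_le
  have hα0 : 0 ≤ (√(α i))⁻¹ := by positivity
  have hq1 := (abs_le.1 ((sq_le_one_iff_abs_le_one q).1 hq.le)).2
  rw [if_pos rfl, ← sq, hq]
  nlinarith

theorem norm_smul_symbolVec_le {r A : ℝ} (hr : r ^ 2 = 200 * A) (hA : 0 < A) (x : Input ι α)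
    {w : ι → κ → ℝ} (hw : ∑ i, ∑ k, w i k * w i k ≤ A) :
    ‖((-r⁻¹ : ℝ) : ℂ) • symbolVec (-1) x w‖₂ ≤ 1 / 7 := by
  rw [← sq_le_sq₀ (norm_nonneg _) (by norm_num), WithLp.toLp_smul, norm_smul, Complex.norm_real,
    mul_pow, Real.norm_eq_abs, sq_abs, neg_sq, inv_pow, hr, inv_mul_le_iff₀ (by positivity)]
  linarith [norm_sq_symbolVec_le (q := -1) (by norm_num) x w]

end

variable [DecidableEq ι]

theorem oracle_neg_oracle_neg {ω : Type} [Fintype ω] [DecidableEq ω] (x : Input ι α) :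
    (oraclePerm ω x).permMatrix ℂ * (negPerm α ω).permMatrix ℂ *
      (oraclePerm ω x).permMatrix ℂ * (negPerm α ω).permMatrix ℂ = 1 := by
  rw [← permMatrix_mul, ← permMatrix_mul, ← permMatrix_mul, ← permMatrix_one]
  congr 1
  ext1 ⟨⟨i, a⟩, w⟩
  have := NeZero.of_pos a.pos
  simp [oraclePerm, negPerm, Function.Involutive.toPerm]

theorem oracle_mulVec_idleVec [DecidableEq κ] (i₀ : ι) (x : Input ι α) :
    (oraclePerm (Option κ) x).permMatrix ℂ *ᵥ idleVec α κ i₀ = idleVec α κ i₀ := by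
  rw [permMatrix_mulVec]
  funext ⟨⟨i, a⟩, o⟩
  cases o <;> simp [oraclePerm, idleVec]

theorem star_idleVec_dotProduct_symbolVec (i₀ : ι) (q : ℝ) (x : Input ι α) (w : ι → κ → ℝ) :
    star (idleVec α κ i₀) ⬝ᵥ symbolVec q x w = 0 := by
  simp [dotProduct, Fintype.sum_prod_type, Fintype.sum_option, symbolVec, idleVec]

theorem star_symbolVec_dotProduct_idleVec (i₀ : ι) (q : ℝ) (x : Input ι α) (w : ι → κ → ℝ) :
    star (symbolVec q x w) ⬝ᵥ idleVec α κ i₀ = 0 := by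
  simp [dotProduct, Fintype.sum_prod_type, Fintype.sum_option, symbolVec, idleVec]

variable [∀ i, NeZero (α i)]

theorem star_idleVec_dotProduct_self (i₀ : ι) :
    star (idleVec α κ i₀) ⬝ᵥ idleVec α κ i₀ = 1 := by
  have h : (α i₀ : ℂ) * ((√(α i₀) : ℂ)⁻¹ * (√(α i₀) : ℂ)⁻¹) = 1 := by
    rw [← mul_inv, ← Complex.ofReal_mul, Real.mul_self_sqrt (Nat.cast_nonneg _)]
    simp
  simpa [dotProduct, Fintype.sum_prod_type, Fintype.sum_option, Fintype.sum_sigma, idleVec]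

theorem norm_idleVec (i₀ : ι) : ‖idleVec α κ i₀‖₂ = 1 := by
  have h := star_dotProduct_self (idleVec α κ i₀)
  rw [star_idleVec_dotProduct_self, eq_comm, Complex.ofReal_eq_one] at h
  exact (pow_eq_one_iff_of_nonneg (norm_nonneg _) two_ne_zero).1 h

theorem norm_sq_idleVec_add_smul_symbolVec (i₀ : ι) (c q : ℝ) (x : Input ι α) (w : ι → κ → ℝ) :
    ‖idleVec α κ i₀ + (c : ℂ) • symbolVec q x w‖₂ ^ 2 = 1 + c ^ 2 * ‖symbolVec q x w‖₂ ^ 2 := by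
  have h := star_dotProduct_self (idleVec α κ i₀ + (c : ℂ) • symbolVec q x w)
  simp only [star_add, add_dotProduct, dotProduct_add, star_smul, smul_dotProduct, dotProduct_smul,
    star_idleVec_dotProduct_self, star_idleVec_dotProduct_symbolVec,
    star_symbolVec_dotProduct_idleVec, star_dotProduct_self (symbolVec q x w), mul_zero,
    RCLike.star_def, Complex.conj_ofReal, smul_eq_mul, zero_add, add_zero] at h
  rw [sq c, mul_assoc]
  exact_mod_cast h.symm

theorem star_idleVec_add_dotProduct_idleVec_add (i₀ : ι) {r : ℝ} (hr : r ≠ 0) (x y : Input ι α)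
    (w w' : ι → κ → ℝ) :
    star (idleVec α κ i₀ + (r : ℂ) • symbolVec 1 x w) ⬝ᵥ
      (idleVec α κ i₀ + ((-r⁻¹ : ℝ) : ℂ) • symbolVec (-1) y w') =
        ((1 - ∑ i, if x i = y i then 0 else ∑ k, w i k * w' i k : ℝ) : ℂ) := by
  simp only [star_add, add_dotProduct, dotProduct_add, star_smul, smul_dotProduct, dotProduct_smul,
    star_idleVec_dotProduct_self, star_idleVec_dotProduct_symbolVec, add_neg_cancel, mul_zero,
    star_symbolVec_dotProduct_idleVec, star_symbolVec_dotProduct_symbolVec, add_zero,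
    zero_add, RCLike.star_def, Complex.conj_ofReal, smul_eq_mul, ← mul_assoc]
  rw [← Complex.ofReal_mul, neg_mul, inv_mul_cancel₀ hr, ← Complex.ofReal_mul,
    ← Complex.ofReal_one, ← Complex.ofReal_add, Complex.ofReal_inj, neg_one_mul, sub_eq_add_neg]
  congr 2
  refine Finset.sum_congr rfl fun i _ => ?_
  split_ifs <;> ring

theorem oracle_mulVec_symbolVec [DecidableEq κ] (q : ℝ) (x : Input ι α) (w : ι → κ → ℝ) :
    (oraclePerm (Option κ) x).permMatrix ℂ *ᵥ symbolVec q 0 w = symbolVec q x w := by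
  rw [permMatrix_mulVec]
  funext ⟨⟨i, a⟩, o⟩
  cases o <;> simp [oraclePerm, symbolVec, sub_eq_zero]

/-- The first reflection negates the states `idleVec + r • symbolVec 1 x (w x)` of the negative
inputs, the second one the vectors `symbolVec 1 0 w`. The eigenvector of a positive input `y` is
`idleVec - r⁻¹ • symbolVec (-1) y (w y)`. -/
theorem exists_round_reflections [DecidableEq κ] (f : PartialFn ι α) {w : Dom f → ι → κ → ℝ}
    (hw : ∀ x y, value f x ≠ value f y →
      ∑ i, (if x.1 i = y.1 i then 0 else ∑ k, w x i k * w y i k) = 1)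
    (i₀ : ι) {r : ℝ} (hr : r ≠ 0) :
    ∃ L ∈ unitaryGroup ((Σ i, Fin (α i)) × Option κ) ℂ,
      ∃ R ∈ unitaryGroup ((Σ i, Fin (α i)) × Option κ) ℂ, ∀ x : Dom f,
        let N := (negPerm α (Option κ)).permMatrix ℂ
        let O := (oraclePerm (Option κ) x.1).permMatrix ℂ
        let V := O * (R * N) * O * (N * L)
        let b := idleVec α κ i₀
        let v := b + (r : ℂ) • symbolVec 1 x.1 (w x)
        let u := b + ((-r⁻¹ : ℝ) : ℂ) • symbolVec (-1) x.1 (w x)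
        (value f x = false → v - V *ᵥ v = (2 : ℂ) • b) ∧ (value f x = true → V *ᵥ u = u) := by
  let b := idleVec α κ i₀
  obtain ⟨L, hLu, hLneg, hLfix⟩ := exists_reflection
    ((fun x : Dom f => b + (r : ℂ) • symbolVec 1 x.1 (w x)) '' {x | value f x = false})
  obtain ⟨R, hRu, hRneg, hRfix⟩ := exists_reflection
    (Set.range fun w : ι → κ → ℝ => symbolVec 1 (0 : Input ι α) w)
  have hRb : R *ᵥ b = b := hRfix _ (by
    rintro _ ⟨w, rfl⟩
    exact star_symbolVec_dotProduct_idleVec ..)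
  have hRsymbol (w : ι → κ → ℝ) :
      R *ᵥ symbolVec (-1) (0 : Input ι α) w = symbolVec (-1) 0 w := hRfix _ (by
    rintro _ ⟨w', rfl⟩
    simp [star_symbolVec_dotProduct_symbolVec])
  refine ⟨L, hLu, R, hRu, fun x => ?_⟩
  intro N O V _ v u
  have hO (c : ℂ) (q : ℝ) :
      O *ᵥ (b + c • symbolVec q 0 (w x)) = b + c • symbolVec q x.1 (w x) := by
    rw [mulVec_add, mulVec_smul, oracle_mulVec_idleVec, oracle_mulVec_symbolVec]
  refine ⟨fun hx => ?_, fun hx => ?_⟩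
  · have hL : L *ᵥ v = O *ᵥ -(b + (r : ℂ) • symbolVec 1 0 (w x)) := by
      rw [mulVec_neg, hO, hLneg v ⟨x, hx, rfl⟩]
    have hR : R *ᵥ -(b + (r : ℂ) • symbolVec 1 0 (w x)) =
        -(b + (-r : ℂ) • symbolVec 1 0 (w x)) := by
      rw [mulVec_neg, mulVec_add, mulVec_smul, hRb, hRneg _ ⟨w x, rfl⟩, smul_neg, neg_smul]
    rw [round_mulVec (oracle_neg_oracle_neg x.1) hL, hR, mulVec_neg, hO]
    module
  · have hLu : L *ᵥ u = u := hLfix u (by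
      rintro _ ⟨y, hy, rfl⟩
      rw [star_idleVec_add_dotProduct_idleVec_add i₀ hr, hw y x (by simp_all)]
      simp)
    rw [round_mulVec (oracle_neg_oracle_neg x.1) (hLu.trans (hO _ _).symm), mulVec_add,
      mulVec_smul, hRb, hRsymbol, hO]

theorem norm_sq_idleVec_add_symbolVec_le {r A : ℝ} (hr : r ^ 2 = 200 * A) (hA : 1 ≤ A)
    (x : Input ι α) {w : ι → κ → ℝ} (hw : ∑ i, ∑ k, w i k * w i k ≤ A) (i₀ : ι) :
    3 * ‖idleVec α κ i₀ + (r : ℂ) • symbolVec 1 x w‖₂ ^ 2 ≤ (50 * A) ^ 2 := by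
  rw [norm_sq_idleVec_add_smul_symbolVec, hr]
  nlinarith [norm_sq_symbolVec_le (one_pow 2) x w]

/-- The algorithm averages `50 * A` rounds applied to `idleVec`. -/
theorem DualFeasible.exists_qAlg [Nonempty ι] {f : PartialFn ι α} {A : ℕ} (hA : 1 ≤ A)
    (h : DualFeasible f A) : ∃ alg : QAlg ι α, alg.T = 100 * A ∧ alg.Computes f := by
  obtain ⟨w, hwA, hw⟩ := h.exists_vectors
  obtain ⟨i₀⟩ := ‹Nonempty ι›
  have hA0 : (1 : ℝ) ≤ A := Nat.one_le_cast.2 hA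
  obtain ⟨r, hr0, hr⟩ : ∃ r : ℝ, r ≠ 0 ∧ r ^ 2 = 200 * A :=
    ⟨√(200 * A), by positivity, Real.sq_sqrt (by positivity)⟩
  obtain ⟨L, hL, R, hR, hLR⟩ := exists_round_reflections f hw i₀ hr0
  have hN := permMatrix_mem_unitaryGroup (negPerm α (Option (Dom f)))
  have : NeZero (50 * A) := ⟨by lia⟩
  obtain ⟨alg, hT, halg⟩ := exists_qAlg_of_rounds (mul_mem hR hN) (mul_mem hN hL) hN (fun x => rfl)
    oracle_neg_oracle_neg (norm_idleVec i₀) (50 * A)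
  refine ⟨alg, by lia, fun x b hx => ?_⟩
  have hO := permMatrix_mem_unitaryGroup (oraclePerm (Option (Dom f)) x)
  have hV := mul_mem (mul_mem (mul_mem hO (mul_mem hR hN)) hO) (mul_mem hN hL)
  obtain ⟨hprob, hsum⟩ := halg x
  let p : Dom f := ⟨x, by simp [hx]⟩
  have hp : value f p = b := by simp [value, p, hx]
  cases b with
  | false =>
    have hle := sq_average_le_third hV ((hLR p).1 hp) (K := 50 * A) <| by
      exact_mod_cast norm_sq_idleVec_add_symbolVec_le hr hA0 x (hwA p) i₀
    linarith
  | true =>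
    rw [hprob]
    refine two_thirds_le_sq_average hV ((hLR p).2 hp) ?_ ?_ _
    · refine (one_le_sq_iff₀ (norm_nonneg _)).1 ?_
      rw [norm_sq_idleVec_add_smul_symbolVec]
      exact le_add_of_nonneg_right (by positivity)
    · rw [add_sub_cancel_left]
      exact norm_smul_symbolVec_le hr (by positivity) x (hwA p)

end DualAlgorithm

section Compactness

variable {X : Type*}

theorem isClosed_setOf_posSemidef [Finite X] : IsClosed {P : Matrix X X ℝ | P.PosSemidef} := by
  have := Fintype.ofFinite X
  simp only [posSemidef_iff_dotProduct_mulVec, IsHermitian, Set.ofPred_and, Set.ofPred_forall]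
  exact (isClosed_eq (by fun_prop) continuous_id).inter <| isClosed_iInter fun v =>
    isClosed_le continuous_const (by fun_prop)

variable [Fintype X]

theorem abs_apply_le_trace {P : Matrix X X ℝ} (hP : P.PosSemidef) (x y : X) :
    |P x y| ≤ P.trace := by
  classical
  obtain ⟨w, hw⟩ := exists_gram_of_posSemidef hP
  have hdiag (z : X) : P z z ≤ P.trace :=
    Finset.single_le_sum (f := fun z => P z z) (fun z _ => hP.diag_nonneg) (Finset.mem_univ z)
  have hxy : |P x y| ≤ (P x x + P y y) / 2 := by
    rw [hw x y, hw x x, hw y y, ← Finset.sum_add_distrib, Finset.sum_div]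
    refine (Finset.abs_sum_le_sum_abs _ _).trans (Finset.sum_le_sum fun k _ => ?_)
    exact abs_le.2 ⟨by nlinarith [sq_nonneg (w x k + w y k)],
      by nlinarith [sq_nonneg (w x k - w y k)]⟩
  linarith [hdiag x, hdiag y]

theorem isCompact_posSemidef_family {ι : Type*} [Fintype ι] (R : ℝ) :
    IsCompact {P : ι → Matrix X X ℝ | (∀ i, (P i).PosSemidef) ∧ ∑ i, (P i).trace ≤ R} := by
  have hcube := isCompact_univ_pi fun _ : ι => isCompact_univ_pi fun _ : X =>
    isCompact_univ_pi fun _ : X => isCompact_Icc (a := -R) (b := R)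
  refine hcube.of_isClosed_subset ?_ fun (P : ι → Matrix X X ℝ) hP i _ x _ y _ => ?_
  · simp only [Set.ofPred_and, Set.ofPred_forall]
    exact (isClosed_iInter fun i => isClosed_setOf_posSemidef.preimage (continuous_apply i)).inter
      (isClosed_le (continuous_finsetSum _ fun i _ =>
        (continuous_apply (A := fun _ => Matrix X X ℝ) i).matrix_trace) continuous_const)
  · have htr : (P i).trace ≤ ∑ i, (P i).trace :=
      Finset.single_le_sum (f := fun i => (P i).trace) (fun j _ => (hP.1 j).trace_nonneg)
        (Finset.mem_univ i)
    exact abs_le.1 ((abs_apply_le_trace (hP.1 i) x y).trans (htr.trans hP.2))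

theorem convex_posSemidef_family {ι : Type*} [Fintype ι] (R : ℝ) :
    Convex ℝ {P : ι → Matrix X X ℝ | (∀ i, (P i).PosSemidef) ∧ ∑ i, (P i).trace ≤ R} := by
  intro P hP Q hQ s t hs ht hst
  refine ⟨fun i => ((hP.1 i).smul hs).add ((hQ.1 i).smul ht), ?_⟩
  calc ∑ i, (s • P i + t • Q i).trace
      = s * ∑ i, (P i).trace + t * ∑ i, (Q i).trace := by
        simp [Finset.sum_add_distrib, Finset.mul_sum]
    _ ≤ s * R + t * R := by gcongr; exacts [hP.2, hQ.2]
    _ = R := by rw [← add_mul, hst, one_mul]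

end Compactness

section Separation

theorem dotProduct_diagonal_mulVec {X : Type*} [Fintype X] [DecidableEq X] (q v : X → ℝ) :
    v ⬝ᵥ diagonal q *ᵥ v = ∑ x, v x ^ 2 * q x := by
  simp only [mulVec_diagonal, dotProduct]
  exact Finset.sum_congr rfl fun x _ => by ring

theorem dotProduct_mulVec_le_of_forall_dotProduct_self_le {X : Type*} [Fintype X]
    {A : Matrix X X ℝ} {R u : ℝ} (hR : 0 < R) (h : ∀ w, w ⬝ᵥ w ≤ R → w ⬝ᵥ A *ᵥ w ≤ u)
    (v : X → ℝ) : v ⬝ᵥ A *ᵥ v ≤ u / R * (v ⬝ᵥ v) := by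
  obtain hv | hv := (star_trivial v ▸ dotProduct_self_star_nonneg v : 0 ≤ v ⬝ᵥ v).eq_or_lt
  · obtain rfl : v = 0 := dotProduct_self_eq_zero.1 hv.symm
    simp
  · have hs : √(R / (v ⬝ᵥ v)) * √(R / (v ⬝ᵥ v)) = R / (v ⬝ᵥ v) :=
      Real.mul_self_sqrt (by positivity)
    have hle := h (√(R / (v ⬝ᵥ v)) • v) <| by
      rw [smul_dotProduct, dotProduct_smul, smul_smul, hs, smul_eq_mul, div_mul_cancel₀ _ hv.ne']
    rw [mulVec_smul, smul_dotProduct, dotProduct_smul, smul_smul, hs, smul_eq_mul,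
      ← le_div_iff₀' (by positivity)] at hle
    exact hle.trans_eq (by field_simp)

theorem nonneg_of_forall_sum_mul_lt {X : Type*} [Fintype X] {q : X → ℝ} {a C : ℝ}
    (h : ∀ d : X → ℝ, (∀ x, d x ≤ a) → ∑ x, d x * q x < C) (x : X) : 0 ≤ q x := by
  classical
  by_contra! hx
  let t := (C - a * ∑ y, q y) / -q x
  have hlt := h (fun _ => a) fun _ => le_rfl
  rw [← Finset.mul_sum] at hlt
  have ht : 0 ≤ t := div_nonneg (by linarith) (by linarith)
  have htx : t * q x = a * ∑ y, q y - C := by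
    rw [div_mul_eq_mul_div, div_neg, mul_div_cancel_right₀ _ hx.ne, neg_sub]
  refine (h (fun y => a - if y = x then t else 0) fun y => ?_).ne ?_
  · split_ifs <;> linarith
  · simp only [sub_mul, ite_mul, zero_mul, Finset.sum_sub_distrib, ← Finset.mul_sum,
      Finset.sum_ite_eq', Finset.mem_univ, if_true, htx, sub_sub_cancel]

theorem exists_pairing {X : Type*} [Fintype X] (F : (X → X → ℝ) × (X → ℝ) →ₗ[ℝ] ℝ) :
    ∃ (B : Matrix X X ℝ) (q : X → ℝ), ∀ M d,
      F (M, d) = ∑ x, ∑ y, M x y * B x y - ∑ x, d x * q x := by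
  classical
  have hcoord (G : (X → ℝ) →ₗ[ℝ] ℝ) : ∃ b : X → ℝ, ∀ v, G v = ∑ x, v x * b x :=
    ⟨_, G.pi_apply_eq_sum_univ⟩
  choose B hB using fun x =>
    hcoord (F.comp ((LinearMap.inl ℝ _ _).comp (LinearMap.single ℝ (fun _ : X => X → ℝ) x)))
  obtain ⟨q, hq⟩ := hcoord (F.comp (LinearMap.inr ℝ _ _))
  refine ⟨B, fun x => -q x, fun M d => ?_⟩
  have hM : F (M, 0) = ∑ x, ∑ y, M x y * B x y := by
    calc F (M, 0) = F.comp (LinearMap.inl ..) (∑ x, Pi.single x (M x)) := by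
          rw [Finset.univ_sum_single]; rfl
      _ = ∑ x, ∑ y, M x y * B x y := by
          rw [map_sum]; exact Finset.sum_congr rfl fun x _ => hB x (M x)
  have hd : F (0, d) = ∑ x, d x * q x := hq d
  calc F (M, d) = F (M, 0) + F (0, d) := by simp [← map_add]
    _ = _ := by simp [hM, hd]

variable {ι : Type} {α : ι → ℕ} [Fintype ι] [DecidableEq ι] {f : PartialFn ι α} {a : ℝ}

/-- The values which a family of matrices gives to the constraints and to the costs of the dual
adversary semidefinite program of `f`. A cost is feasible when the image of the semidefinite
families meets a convex set. -/
def dualMap (f : PartialFn ι α) :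
    (ι → Matrix (Dom f) (Dom f) ℝ) →ₗ[ℝ] (Dom f → Dom f → ℝ) × (Dom f → ℝ) where
  toFun P := (fun x y => if value f x = value f y then 0 else
    ∑ i, disagreePart (fun z => z.1 i) (P i) x y, fun x => ∑ i, P i x x)
  map_add' P Q := by
    ext x y
    · simp only [disagreePart, of_apply, Pi.add_apply, Matrix.add_apply, Prod.fst_add,
        ite_add_ite, ← Finset.sum_add_distrib, add_zero]
    · simp [Finset.sum_add_distrib]
  map_smul' c P := by ext x y <;> simp [disagreePart, Finset.mul_sum]

theorem dualMap_single (f : PartialFn ι α) (i : ι) (P : Matrix (Dom f) (Dom f) ℝ) :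
    dualMap f (Pi.single i P) = (fun x y => if value f x = value f y then 0 else
      disagreePart (fun z => z.1 i) P x y, fun x => P x x) := by
  ext x y <;> simp only [dualMap, LinearMap.coe_mk, AddHom.coe_mk]
  · rw [Fintype.sum_eq_single i fun j hj => by simp [hj, disagreePart], Pi.single_eq_same]
  · rw [Fintype.sum_eq_single i fun j hj => by simp [hj], Pi.single_eq_same]

/-- The matrices `P` of bounded trace form a compact set, whose image is separated from the
targets of the dual program. -/
theorem exists_separating_weights (h : ¬DualFeasible f a) {R : ℝ} (hR : 0 ≤ R) :
    ∃ (B : Matrix (Dom f) (Dom f) ℝ) (q : Dom f → ℝ), ∃ u > 0,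
      (∀ x y, value f x = value f y → B x y = 0) ∧
      (∀ i w, w ⬝ᵥ w ≤ R →
        w ⬝ᵥ (disagreePart (fun z => z.1 i) B - diagonal q) *ᵥ w < u) ∧
      ∀ d : Dom f → ℝ, (∀ x, d x ≤ a) → u < ∑ x, ∑ y, B x y - ∑ x, d x * q x := by
  let J : Dom f → Dom f → ℝ := fun x y => if value f x = value f y then 0 else 1
  obtain ⟨F, u, v, hu, huv, hv⟩ := geometric_hahn_banach_compact_closed
    ((convex_posSemidef_family R).is_linear_image (dualMap f).isLinear)
    ((isCompact_posSemidef_family R).image (dualMap f).continuous_of_finiteDimensional)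
    ((convex_singleton J).prod (convex_Iic fun _ => a)) (isClosed_singleton.prod isClosed_Iic) <| by
      rw [Set.disjoint_left]
      rintro _ ⟨P, hP, rfl⟩ ⟨hJ, ha⟩
      exact h ⟨P, hP.1, ha, fun x y hxy => by simpa [dualMap, J, hxy] using congrFun₂ hJ x y⟩
  obtain ⟨B, q, hF⟩ := exists_pairing F.toLinearMap
  have hu0 : 0 < u := by
    simpa using hu 0 ⟨0, ⟨fun _ => PosSemidef.zero, by simpa using hR⟩, map_zero _⟩
  refine ⟨disagreePart (value f) B, q, u, hu0, fun x y hxy => if_pos hxy, fun i w hw => ?_,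
    fun d hd => ?_⟩
  · let P : ι → Matrix (Dom f) (Dom f) ℝ := Pi.single i (vecMulVec w w)
    have hP : (∀ j, (P j).PosSemidef) ∧ ∑ j, (P j).trace ≤ R := by
      refine ⟨fun j => ?_, ?_⟩
      · obtain rfl | hj := eq_or_ne j i
        · simpa [P] using posSemidef_vecMulVec_self_star w
        · simpa [P, hj] using PosSemidef.zero
      · rwa [Fintype.sum_eq_single i fun j hj => by simp [P, hj], show P i = _ from
          Pi.single_eq_same .., trace_vecMulVec]
    have hlt := hu _ ⟨P, hP, dualMap_single f i _⟩
    rw [show F (_, _) = _ from hF ..] at hlt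
    rw [sub_mulVec, dotProduct_sub, dotProduct_diagonal_mulVec]
    convert hlt using 2
    · simp only [dotProduct, mulVec, Finset.mul_sum, disagreePart, of_apply, vecMulVec_apply]
      refine Finset.sum_congr rfl fun x _ => Finset.sum_congr rfl fun y _ => ?_
      split_ifs <;> ring
    · simp only [vecMulVec_apply, sq]
  · have := huv.trans (hv (J, d) ⟨rfl, hd⟩)
    rw [show F (J, d) = _ from hF J d] at this
    simpa [J, disagreePart] using this

theorem exists_weights_of_not_dualFeasible (h : ¬DualFeasible f a) (ha : 0 ≤ a) :
    ∃ (B : Matrix (Dom f) (Dom f) ℝ) (q : Dom f → ℝ),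
      (∀ x y, value f x = value f y → B x y = 0) ∧ (∀ x, 0 < q x) ∧
      a * ∑ x, q x < ∑ x, ∑ y, B x y ∧
      ∀ i v, 0 ≤ v ⬝ᵥ (diagonal q - disagreePart (fun z => z.1 i) B) *ᵥ v := by
  set R := a * Fintype.card (Dom f) + 1 with hR
  have hR0 : 0 < R := by positivity
  obtain ⟨B, q, u, hu, hB, hi, ht⟩ := exists_separating_weights h hR0.le
  have hq := nonneg_of_forall_sum_mul_lt (q := q) fun d hd => lt_sub_comm.1 (ht d hd)
  refine ⟨B, fun x => q x + u / R, hB, fun x => add_pos_of_nonneg_of_pos (hq x) (by positivity),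
    ?_, fun i v => ?_⟩
  · have hsum := ht (fun _ => a) fun _ => le_rfl
    rw [← Finset.mul_sum] at hsum
    have hcard : a * Fintype.card (Dom f) * (u / R) ≤ u := by
      rw [← mul_div_assoc, div_le_iff₀ hR0, hR]
      linarith
    simp only [Finset.sum_add_distrib, Finset.sum_const, Finset.card_univ, nsmul_eq_mul, mul_add]
    linarith
  · have hle := dotProduct_mulVec_le_of_forall_dotProduct_self_le hR0
      (fun w hw => (hi i w hw).le) v
    have hdiag : diagonal (fun x => q x + u / R) = diagonal q + (u / R) • 1 := by
      rw [smul_one_eq_diagonal, diagonal_add]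
    rw [sub_mulVec, dotProduct_sub] at hle ⊢
    rw [hdiag, add_mulVec, smul_mulVec, one_mulVec, dotProduct_add, dotProduct_smul, smul_eq_mul]
    linarith

end Separation

section AdversaryMatrix

open scoped MatrixOrder in
theorem exists_unit_vector_smul_one_sub_posSemidef {X : Type*} [Fintype X] [DecidableEq X]
    [Nonempty X] {A : Matrix X X ℝ} (hA : A.IsHermitian) :
    ∃ δ : X → ℝ, δ ⬝ᵥ δ = 1 ∧ ((δ ⬝ᵥ A *ᵥ δ) • 1 - A).PosSemidef := by
  obtain ⟨j, hj⟩ := Finite.exists_max hA.eigenvalues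
  let δ : X → ℝ := hA.eigenvectorBasis j
  have hδ : δ ⬝ᵥ δ = 1 := by
    rw [← inner_self_eq_one_of_norm_eq_one (𝕜 := ℝ) (hA.eigenvectorBasis.orthonormal.1 j),
      EuclideanSpace.inner_eq_star_dotProduct, star_trivial]
  have hAδ : δ ⬝ᵥ A *ᵥ δ = hA.eigenvalues j := by
    rw [show A *ᵥ δ = _ from hA.mulVec_eigenvectorBasis j, dotProduct_smul, hδ, smul_eq_mul,
      mul_one]
  refine ⟨δ, hδ, ?_⟩
  rw [hAδ, ← Algebra.algebraMap_eq_smul_one]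
  refine le_algebraMap_of_spectrum_le (fun t ht => ?_) hA.isSelfAdjoint
  obtain ⟨l, rfl⟩ := hA.spectrum_real_eq_range_eigenvalues ▸ ht
  exact hj l

section DisagreePart

variable {X Y : Type*} [DecidableEq Y] (s : X → Y)

theorem disagreePart_add (K L : Matrix X X ℝ) :
    disagreePart s (K + L) = disagreePart s K + disagreePart s L := by
  ext x y; simp [disagreePart, ite_add_ite]

theorem disagreePart_smul (c : ℝ) (K : Matrix X X ℝ) :
    disagreePart s (c • K) = c • disagreePart s K := by
  ext x y; simp [disagreePart]

theorem disagreePart_transpose (K : Matrix X X ℝ) :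
    disagreePart s Kᵀ = (disagreePart s K)ᵀ := by
  ext x y; simp [disagreePart, eq_comm]

theorem isHermitian_disagreePart {K : Matrix X X ℝ} (hK : K.IsHermitian) :
    (disagreePart s K).IsHermitian := by
  rw [IsHermitian, conjTranspose_eq_transpose_of_trivial, ← disagreePart_transpose,
    ← conjTranspose_eq_transpose_of_trivial, hK.eq]

theorem disagreePart_diagonal_mul_mul_diagonal [Fintype X] [DecidableEq X] (u v : X → ℝ)
    (K : Matrix X X ℝ) :
    disagreePart s (diagonal u * K * diagonal v) =
      diagonal u * disagreePart s K * diagonal v := by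
  ext x y; simp [disagreePart]

end DisagreePart

variable {ι : Type} {α : ι → ℕ} [Fintype ι] [DecidableEq ι] {f : PartialFn ι α} {a : ℝ}

theorem exists_symm_weights_of_not_dualFeasible (h : ¬DualFeasible f a) (ha : 0 ≤ a) :
    ∃ (B : Matrix (Dom f) (Dom f) ℝ) (q : Dom f → ℝ), B.IsHermitian ∧
      (∀ x y, value f x = value f y → B x y = 0) ∧ (∀ x, 0 < q x) ∧
      a * ∑ x, q x < ∑ x, ∑ y, B x y ∧
      ∀ i, (diagonal q - disagreePart (fun z => z.1 i) B).PosSemidef := by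
  obtain ⟨B, q, hB, hq, hlt, hi⟩ := exists_weights_of_not_dualFeasible h ha
  have hS : ((1 / 2 : ℝ) • (B + Bᵀ)).IsHermitian := by
    simp [IsHermitian, conjTranspose_eq_transpose_of_trivial, add_comm]
  refine ⟨(1 / 2 : ℝ) • (B + Bᵀ), q, hS, fun x y hxy => ?_, hq, ?_, fun i => ?_⟩
  · simp [hB x y hxy, hB y x hxy.symm]
  · simp only [Matrix.smul_apply, Matrix.add_apply, transpose_apply, smul_eq_mul, ← Finset.mul_sum,
      Finset.sum_add_distrib]
    rw [Finset.sum_comm (f := fun x y => B y x)]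
    linarith
  · have hherm := (isHermitian_diagonal q).sub (isHermitian_disagreePart (fun z => z.1 i) hS)
    refine .of_dotProduct_mulVec_nonneg hherm fun v => ?_
    have htr (C : Matrix (Dom f) (Dom f) ℝ) : v ⬝ᵥ Cᵀ *ᵥ v = v ⬝ᵥ C *ᵥ v := by
      rw [mulVec_transpose, dotProduct_comm, dotProduct_mulVec]
    rw [disagreePart_smul, disagreePart_add, disagreePart_transpose, star_trivial, sub_mulVec,
      smul_mulVec, add_mulVec, dotProduct_sub, dotProduct_smul, dotProduct_add, htr, smul_eq_mul]
    have hv := hi i v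
    rw [sub_mulVec, dotProduct_sub] at hv
    linarith

theorem exists_normalized_weights_of_not_dualFeasible (h : ¬DualFeasible f a) (ha : 0 ≤ a) :
    ∃ (A : Matrix (Dom f) (Dom f) ℝ) (r : Dom f → ℝ), A.IsHermitian ∧
      (∀ x y, value f x = value f y → A x y = 0) ∧ a * (r ⬝ᵥ r) < r ⬝ᵥ A *ᵥ r ∧
      ∀ i, (1 - disagreePart (fun z => z.1 i) A).PosSemidef := by
  obtain ⟨B, q, hBherm, hB, hq, hlt, hi⟩ := exists_symm_weights_of_not_dualFeasible h ha
  let r (x : Dom f) : ℝ := √(q x)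
  have hr (x : Dom f) : r x ≠ 0 := (Real.sqrt_pos.2 (hq x)).ne'
  have hrr (x : Dom f) : r x * r x = q x := Real.mul_self_sqrt (hq x).le
  let D : Matrix (Dom f) (Dom f) ℝ := diagonal fun x => (r x)⁻¹
  have hD : Dᴴ = D := by simp [D]
  have hDr : D *ᵥ r = 1 := by ext x; simp [D, mulVec_diagonal, hr x]
  have hrD : r ᵥ* D = 1 := by ext x; simp [D, vecMul_diagonal, hr x]
  refine ⟨D * B * D, r, ?_, fun x y hxy => ?_, ?_, fun i => ?_⟩
  · simpa only [hD] using isHermitian_mul_mul_conjTranspose D hBherm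
  · simp [D, hB x y hxy]
  · have hrB : r ⬝ᵥ (D * B * D) *ᵥ r = ∑ x, ∑ y, B x y := by
      rw [← mulVec_mulVec, hDr, ← mulVec_mulVec, dotProduct_mulVec, hrD]
      simp [dotProduct, mulVec]
    have hrdot : r ⬝ᵥ r = ∑ x, q x := Finset.sum_congr rfl fun x _ => hrr x
    rwa [hrB, hrdot]
  · have hDq : D * diagonal q * Dᴴ = 1 := by
      rw [hD, diagonal_mul_diagonal, diagonal_mul_diagonal, ← diagonal_one]
      congr with x
      rw [← hrr]
      field_simp [hr x]
    have hpart := (hi i).mul_mul_conjTranspose_same D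
    rwa [mul_sub, sub_mul, hDq, hD, ← disagreePart_diagonal_mul_mul_diagonal] at hpart

theorem exists_adversary_matrix (h : ¬DualFeasible f a) (ha : 0 < a) :
    ∃ (Γ : Matrix (Dom f) (Dom f) ℝ) (δ : Dom f → ℝ), (1 - Γ).PosSemidef ∧
      (∀ x y, value f x = value f y → Γ x y = 0) ∧ δ ⬝ᵥ δ = 1 ∧ δ ⬝ᵥ Γ *ᵥ δ = 1 ∧
      ∀ i, (a⁻¹ • 1 - disagreePart (fun z => z.1 i) Γ).PosSemidef := by
  obtain ⟨A, r, hherm, hA, hlt, hi⟩ := exists_normalized_weights_of_not_dualFeasible h ha.le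
  have : Nonempty (Dom f) := by
    by_contra! hempty
    simp at hlt
  obtain ⟨δ, hδ, hmax⟩ := exists_unit_vector_smul_one_sub_posSemidef hherm
  set l := δ ⬝ᵥ A *ᵥ δ
  have hal : a < l := by
    have hle := hmax.dotProduct_mulVec_nonneg r
    rw [star_trivial, sub_mulVec, smul_mulVec, one_mulVec, dotProduct_sub, dotProduct_smul,
      smul_eq_mul] at hle
    exact lt_of_mul_lt_mul_right (by linarith)
      (star_trivial r ▸ dotProduct_self_star_nonneg r)
  have hl : 0 < l := ha.trans hal
  refine ⟨l⁻¹ • A, δ, ?_, fun x y hxy => ?_, hδ, ?_, fun i => ?_⟩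
  · convert hmax.smul (inv_pos.2 hl).le using 1
    rw [smul_sub, smul_smul, inv_mul_cancel₀ hl.ne', one_smul]
  · rw [Matrix.smul_apply, hA x y hxy, smul_zero]
  · rw [smul_mulVec, dotProduct_smul, smul_eq_mul, inv_mul_cancel₀ hl.ne']
  · have hinv : l⁻¹ ≤ a⁻¹ := inv_anti₀ ha hal.le
    convert ((hi i).smul (inv_pos.2 hl).le).add (PosSemidef.one.smul (sub_nonneg.2 hinv)) using 1
    rw [disagreePart_smul]
    module

end AdversaryMatrix

/-! ### Progress measures -/

section Progress

variable {Y τ : Type*} [Fintype Y] [Fintype τ] {K L : Matrix Y Y ℝ}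

/-- The progress measure `∑ x y, K x y * Re ⟨Ψ x, Ψ y⟩` of a family `Ψ` of states, indexed by
inputs, with respect to a kernel `K`. -/
noncomputable def progress (K : Matrix Y Y ℝ) (Ψ : Y → τ → ℂ) : ℝ :=
  ∑ x, ∑ y, K x y * (star (Ψ x) ⬝ᵥ Ψ y).re

theorem progress_add (K L : Matrix Y Y ℝ) (Ψ : Y → τ → ℂ) :
    progress (K + L) Ψ = progress K Ψ + progress L Ψ := by
  simp [progress, add_mul, Finset.sum_add_distrib]

theorem progress_sub (K L : Matrix Y Y ℝ) (Ψ : Y → τ → ℂ) :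
    progress (K - L) Ψ = progress K Ψ - progress L Ψ := by
  simp [progress, sub_mul, Finset.sum_sub_distrib]

theorem progress_smul (r : ℝ) (K : Matrix Y Y ℝ) (Ψ : Y → τ → ℂ) :
    progress (r • K) Ψ = r * progress K Ψ := by
  simp [progress, mul_assoc, Finset.mul_sum]

theorem progress_diagonal [DecidableEq Y] (d : Y → ℝ) (Ψ : Y → τ → ℂ) :
    progress (diagonal d) Ψ = ∑ x, d x * ‖Ψ x‖₂ ^ 2 := by
  refine Finset.sum_congr rfl fun x _ => ?_
  rw [Fintype.sum_eq_single x fun y hy => by rw [diagonal_apply_ne _ hy.symm, zero_mul],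
    diagonal_apply_eq, star_dotProduct_self, Complex.ofReal_re]

theorem progress_nonneg (hK : K.PosSemidef) (Ψ : Y → τ → ℂ) : 0 ≤ progress K Ψ := by
  obtain ⟨w, hw⟩ := exists_gram_of_posSemidef hK
  let φ (k : Y) : τ → ℂ := ∑ x, (w x k : ℂ) • Ψ x
  calc 0 ≤ ∑ k, ‖φ k‖₂ ^ 2 := by positivity
    _ = ∑ k, (star (φ k) ⬝ᵥ φ k).re := by simp only [star_dotProduct_self, Complex.ofReal_re]
    _ = ∑ k, ∑ x, ∑ y, w x k * w y k * (star (Ψ x) ⬝ᵥ Ψ y).re := by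
      refine Finset.sum_congr rfl fun k _ => ?_
      rw [Finset.sum_comm]
      simp [φ, star_sum, sum_dotProduct, dotProduct_sum, Finset.mul_sum, mul_assoc, mul_left_comm]
    _ = progress K Ψ := by
      simp only [progress, hw, Finset.sum_mul]
      rw [Finset.sum_comm]
      exact Finset.sum_congr rfl fun x _ => Finset.sum_comm

theorem progress_mono (h : (L - K).PosSemidef) (Ψ : Y → τ → ℂ) : progress K Ψ ≤ progress L Ψ :=
  sub_nonneg.1 (progress_sub L K Ψ ▸ progress_nonneg h Ψ)

theorem progress_congr {Ψ Ψ' : Y → τ → ℂ}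
    (h : ∀ x y, K x y ≠ 0 → star (Ψ x) ⬝ᵥ Ψ y = star (Ψ' x) ⬝ᵥ Ψ' y) :
    progress K Ψ = progress K Ψ' := by
  refine Finset.sum_congr rfl fun x _ => Finset.sum_congr rfl fun y _ => ?_
  obtain hK | hK := eq_or_ne (K x y) 0
  · simp [hK]
  · rw [h x y hK]

theorem progress_mulVec [DecidableEq τ] (K : Matrix Y Y ℝ) {U : Matrix τ τ ℂ}
    (hU : U ∈ unitaryGroup τ ℂ) (Ψ : Y → τ → ℂ) :
    progress K (fun x => U *ᵥ Ψ x) = progress K Ψ :=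
  progress_congr fun _ _ _ => star_mulVec_dotProduct_mulVec hU _ _

theorem progress_ofReal_smul (K : Matrix Y Y ℝ) (d : Y → ℝ) (v : τ → ℂ) :
    progress K (fun x => (d x : ℂ) • v) = (d ⬝ᵥ K *ᵥ d) * ‖v‖₂ ^ 2 := by
  have hinner (x y : Y) : (star ((d x : ℂ) • v) ⬝ᵥ ((d y : ℂ) • v)).re = d x * d y * ‖v‖₂ ^ 2 := by
    simp only [star_smul, smul_dotProduct, dotProduct_smul, star_dotProduct_self, RCLike.star_def,
      Complex.conj_ofReal, smul_eq_mul, ← Complex.ofReal_mul, Complex.ofReal_re]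
    ring
  simp only [progress, hinner]
  simp only [dotProduct, mulVec, Finset.mul_sum, Finset.sum_mul]
  exact Finset.sum_congr rfl fun x _ => Finset.sum_congr rfl fun y _ => by ring

/-- The kernel `K` majorizes a kernel `K₀`, supported on the pairs which agree on the symbol `s`,
such that `θ • K₀` dominates the part of `K` on the pairs which disagree on `s`. Reading the symbol
then increases progress by a factor of at most `1 + 2 * θ`. -/
def QueryBounded {S : Type*} [DecidableEq S] (θ : ℝ) (s : Y → S) (K : Matrix Y Y ℝ) : Prop :=
  ∃ K₀ : Matrix Y Y ℝ, disagreePart s K₀ = 0 ∧ (θ • K₀ - disagreePart s K).PosSemidef ∧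
    (θ • K₀ + disagreePart s K).PosSemidef ∧ (K - K₀).PosSemidef

theorem QueryBounded.progress_le {S : Type*} [DecidableEq S] {θ : ℝ} {s : Y → S}
    (h : QueryBounded θ s K) (hθ : 0 ≤ θ) {Ψ Ψ' : Y → τ → ℂ}
    (hΨ : ∀ x y, s x = s y → star (Ψ' x) ⬝ᵥ Ψ' y = star (Ψ x) ⬝ᵥ Ψ y) :
    progress K Ψ' ≤ (1 + 2 * θ) * progress K Ψ := by
  obtain ⟨K₀, hK₀, hsub, hadd, hle⟩ := h
  have hagree (L : Matrix Y Y ℝ) (hL : disagreePart s L = 0) : progress L Ψ' = progress L Ψ :=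
    progress_congr fun x y hxy => hΨ x y <| by
      by_contra hs
      exact hxy (by simpa [disagreePart, hs] using congrFun₂ hL x y)
  have hpart := hagree (K - disagreePart s K) (by ext x y; simp +contextual [disagreePart])
  have hsub' := progress_nonneg hsub Ψ'
  have hadd' := progress_nonneg hadd Ψ
  have hle' := mul_le_mul_of_nonneg_left (progress_mono hle Ψ) hθ
  rw [progress_sub, progress_sub] at hpart
  rw [progress_sub, progress_smul, hagree K₀ hK₀] at hsub'
  rw [progress_add, progress_smul] at hadd'
  linarith

end Progress

section HadamardProduct

variable {Y κ : Type*} [Finite Y] {A B : κ → Matrix Y Y ℝ}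

theorem posSemidef_of_prod (hA : ∀ l, (A l).PosSemidef) (s : Finset κ) :
    (of fun x y => ∏ l ∈ s, A l x y).PosSemidef := by
  classical
  induction s using Finset.induction_on with
  | empty =>
    convert posSemidef_vecMulVec_self_star (1 : Y → ℝ) using 1
    ext x y
    simp
  | insert l s hl ih =>
    have hprod : (of fun x y => ∏ j ∈ insert l s, A j x y) =
        A l ⊙ of fun x y => ∏ j ∈ s, A j x y := by
      ext x y
      simp [Finset.prod_insert hl]
    exact hprod ▸ (hA l).hadamard ih

theorem posSemidef_of_prod_sub (hA : ∀ l, (A l).PosSemidef) (hAB : ∀ l, (B l - A l).PosSemidef)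
    (s : Finset κ) :
    ((of fun x y => ∏ l ∈ s, B l x y) - of fun x y => ∏ l ∈ s, A l x y).PosSemidef := by
  classical
  induction s using Finset.induction_on with
  | empty => simpa using PosSemidef.zero
  | insert l s hl ih =>
    have hB : (B l).PosSemidef := by simpa using (hAB l).add (hA l)
    have hprod : ((of fun x y => ∏ j ∈ insert l s, B j x y) -
          of fun x y => ∏ j ∈ insert l s, A j x y) =
        B l ⊙ ((of fun x y => ∏ j ∈ s, B j x y) - of fun x y => ∏ j ∈ s, A j x y) +
          (B l - A l) ⊙ of fun x y => ∏ j ∈ s, A j x y := by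
      ext x y
      simp only [Finset.prod_insert hl, Matrix.sub_apply, Matrix.add_apply, hadamard_apply,
        of_apply]
      ring
    exact hprod ▸ (hB.hadamard ih).add ((hAB l).hadamard (posSemidef_of_prod hA s))

end HadamardProduct

section ProdKernel

variable {X κ : Type*} [Fintype κ]

/-- The tensor product of the kernels `k l`, a kernel for tuples of independent inputs. -/
def prodKernel (k : κ → Matrix X X ℝ) : Matrix (κ → X) (κ → X) ℝ :=
  of fun x y => ∏ l, k l (x l) (y l)

theorem prodKernel_update [DecidableEq κ] (k : κ → Matrix X X ℝ) (l : κ) (m : Matrix X X ℝ)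
    (x y : κ → X) : prodKernel (Function.update k l m) x y =
      m (x l) (y l) * ∏ j ∈ Finset.univ.erase l, k j (x j) (y j) := by
  rw [prodKernel, of_apply, ← Finset.mul_prod_erase _ _ (Finset.mem_univ l), Function.update_self]
  congr 1
  exact Finset.prod_congr rfl fun j hj => by rw [Function.update_of_ne (Finset.ne_of_mem_erase hj)]

theorem prodKernel_diagonal [DecidableEq X] (d : κ → X → ℝ) :
    prodKernel (fun l => diagonal (d l)) = diagonal fun x : κ → X => ∏ l, d l (x l) := by
  ext x y
  obtain rfl | hxy := eq_or_ne x y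
  · simp [prodKernel]
  · obtain ⟨l, hl⟩ := Function.ne_iff.1 hxy
    rw [diagonal_apply_ne _ hxy]
    exact Finset.prod_eq_zero (Finset.mem_univ l) (diagonal_apply_ne _ hl)

theorem dotProduct_prodKernel_mulVec [Fintype X] [DecidableEq κ] (k : κ → Matrix X X ℝ)
    (δ : κ → X → ℝ) :
    (fun x : κ → X => ∏ l, δ l (x l)) ⬝ᵥ prodKernel k *ᵥ (fun x => ∏ l, δ l (x l)) =
      ∏ l, δ l ⬝ᵥ k l *ᵥ δ l := by
  simp only [prodKernel, dotProduct, mulVec, of_apply, Finset.mul_sum,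
    ← Finset.prod_mul_distrib, Finset.prod_univ_sum, Fintype.piFinset_univ]

theorem prod_dotProduct_prod [Fintype X] [DecidableEq κ] (δ : κ → X → ℝ) :
    (fun x : κ → X => ∏ l, δ l (x l)) ⬝ᵥ (fun x => ∏ l, δ l (x l)) = ∏ l, δ l ⬝ᵥ δ l := by
  simp only [dotProduct, Finset.prod_univ_sum, Fintype.piFinset_univ, Finset.prod_mul_distrib]

theorem posSemidef_prodKernel [Finite X] {A : κ → Matrix X X ℝ} (hA : ∀ l, (A l).PosSemidef) :
    (prodKernel A).PosSemidef :=
  posSemidef_of_prod (fun l => (hA l).submatrix fun x : κ → X => x l) _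

theorem posSemidef_prodKernel_sub [Finite X] {A B : κ → Matrix X X ℝ}
    (hA : ∀ l, (A l).PosSemidef) (hAB : ∀ l, (B l - A l).PosSemidef) :
    (prodKernel B - prodKernel A).PosSemidef :=
  posSemidef_of_prod_sub (fun l => (hA l).submatrix fun x : κ → X => x l)
    (fun l => (hAB l).submatrix fun x : κ → X => x l) _

theorem disagreePart_prodKernel_update [DecidableEq κ] {S : Type*} [DecidableEq S] (s : X → S)
    (k : κ → Matrix X X ℝ) (l : κ) (m : Matrix X X ℝ) :
    disagreePart (fun x => s (x l)) (prodKernel (Function.update k l m)) =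
      prodKernel (Function.update k l (disagreePart s m)) := by
  ext x y
  simp only [disagreePart, prodKernel_update, of_apply, ite_mul, zero_mul]

theorem QueryBounded.prodKernel [Finite X] {S : Type*} [DecidableEq S] {θ : ℝ}
    {s : X → S} {k : κ → Matrix X X ℝ} {l : κ} (h : QueryBounded θ s (k l))
    (hk : ∀ l, (k l).PosSemidef) : QueryBounded θ (fun x => s (x l)) (prodKernel k) := by
  classical
  obtain ⟨K₀, hK₀, hsub, hadd, hle⟩ := h
  have hupdate {m : Matrix X X ℝ} (hm : m.PosSemidef) :
      (QC.prodKernel (Function.update k l m)).PosSemidef :=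
    posSemidef_prodKernel fun j => by
      obtain rfl | hj := eq_or_ne j l
      · simpa using hm
      · simpa [hj] using hk j
  have hpart : disagreePart (fun x => s (x l)) (QC.prodKernel k) =
      QC.prodKernel (Function.update k l (disagreePart s (k l))) := by
    simpa using disagreePart_prodKernel_update s k l (k l)
  have hself (x y : κ → X) : QC.prodKernel k x y =
      k l (x l) (y l) * ∏ j ∈ Finset.univ.erase l, k j (x j) (y j) := by
    simpa using prodKernel_update k l (k l) x y
  refine ⟨QC.prodKernel (Function.update k l K₀), ?_, ?_, ?_, ?_⟩
  · ext x y
    rw [disagreePart_prodKernel_update, hK₀, prodKernel_update, Matrix.zero_apply, zero_mul,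
      Matrix.zero_apply]
  · convert hupdate hsub using 1
    ext x y
    simp only [hpart, Matrix.sub_apply, Matrix.smul_apply, prodKernel_update, smul_eq_mul]
    ring
  · convert hupdate hadd using 1
    ext x y
    simp only [hpart, Matrix.add_apply, Matrix.smul_apply, prodKernel_update, smul_eq_mul]
    ring
  · convert hupdate hle using 1
    ext x y
    simp only [hself, Matrix.sub_apply, prodKernel_update]
    ring

end ProdKernel

section AdversaryKernel

theorem diagonal_mul_mul_diagonal_eq_smul {X Y : Type*} [Fintype X] [DecidableEq X] {g : X → Y}
    {Γ : Matrix X X ℝ} (hΓ : ∀ x y, g x = g y → Γ x y = 0) {u : X → ℝ} {e : ℝ}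
    (hu : ∀ x y, g x ≠ g y → u x * u y = e) : diagonal u * Γ * diagonal u = e • Γ := by
  ext x y
  rw [mul_diagonal, diagonal_mul, Matrix.smul_apply, smul_eq_mul]
  by_cases hxy : g x = g y
  · simp [hΓ x y hxy]
  · rw [← hu x y hxy]
    ring

theorem posSemidef_diagonal_mul_mul_diagonal {X : Type*} [Fintype X] [DecidableEq X] (u : X → ℝ)
    {P : Matrix X X ℝ} (hP : P.PosSemidef) : (diagonal u * P * diagonal u).PosSemidef := by
  simpa [diagonal_conjTranspose] using hP.mul_mul_conjTranspose_same (diagonal u)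

variable {X : Type*} [Finite X] [DecidableEq X] {g : X → Bool} {Γ : Matrix X X ℝ}

/-- Scaling by `1 / 2` on the class `b` and by `2` off it fixes `Γ`, so it turns `Γ ≤ 1` into an
upper bound on `Γ` which gains on the class `b`. -/
theorem posSemidef_sub_diagonal_class (hΓ : (1 - Γ).PosSemidef)
    (hg : ∀ x y, g x = g y → Γ x y = 0) (b : Bool) :
    ((4 / 3 : ℝ) • 1 - (1 / 3 : ℝ) • Γ -
      diagonal fun x => if g x = b then (5 / 4 : ℝ) else 0).PosSemidef := by
  have := Fintype.ofFinite X
  let u (x : X) : ℝ := if g x = b then 1 / 2 else 2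
  have hu := diagonal_mul_mul_diagonal_eq_smul hg (u := u) (e := 1) fun x y hxy => by
    cases hx : g x <;> cases hy : g y <;> cases b <;> simp_all [u]
  convert (posSemidef_diagonal_mul_mul_diagonal u hΓ).smul (show (0 : ℝ) ≤ 1 / 3 by norm_num)
    using 1
  rw [mul_sub, sub_mul, hu, mul_one, diagonal_mul_diagonal]
  ext x y
  obtain rfl | hxy := eq_or_ne x y
  · simp only [Matrix.sub_apply, Matrix.smul_apply, diagonal_apply_eq, one_apply_eq, smul_eq_mul, u]
    split_ifs <;> ring
  · simp [hxy]

theorem queryBounded_of_posSemidef {S : Type*} [DecidableEq S] {s : X → S} {θ r : ℝ}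
    {k : Matrix X X ℝ} (hg : ∀ x y, g x = g y → Γ x y = 0)
    (hquery : (θ • 1 - disagreePart s Γ).PosSemidef) (hr : 0 ≤ r) (hk : (k - 1).PosSemidef)
    (hkΓ : disagreePart s k = -(r • disagreePart s Γ)) : QueryBounded (r * θ) s k := by
  have := Fintype.ofFinite X
  let u (x : X) : ℝ := if g x then 1 else -1
  have hu := diagonal_mul_mul_diagonal_eq_smul hg (u := u) (e := -1) fun x y hxy => by
    grind
  have huu : diagonal u * diagonal u = 1 := by
    rw [diagonal_mul_diagonal, ← diagonal_one]
    exact congrArg diagonal (funext fun x => by grind)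
  have hquery' : (θ • 1 + disagreePart s Γ).PosSemidef := by
    convert posSemidef_diagonal_mul_mul_diagonal u hquery using 1
    rw [mul_sub, sub_mul, ← disagreePart_diagonal_mul_mul_diagonal, hu, disagreePart_smul,
      mul_smul_comm, smul_mul_assoc, mul_one, huu]
    module
  refine ⟨1, ?_, ?_, ?_, hk⟩
  · ext x y
    simp +contextual [disagreePart, one_apply, not_imp_not]
  · convert hquery'.smul hr using 1
    rw [hkΓ]
    module
  · convert hquery.smul hr using 1
    rw [hkΓ]
    module

theorem exists_kernel_of_not_dualFeasible {ι : Type} [Fintype ι] [DecidableEq ι] {α : ι → ℕ}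
    {f : PartialFn ι α} {a : ℝ} (h : ¬DualFeasible f a) (ha : 0 < a) :
    ∃ (k : Matrix (Dom f) (Dom f) ℝ) (δ : Dom f → ℝ),
      δ ⬝ᵥ δ = 1 ∧ δ ⬝ᵥ k *ᵥ δ = 1 ∧ (k - 1).PosSemidef ∧
      (∀ b, (k - diagonal fun x => if value f x = b then (5 / 4 : ℝ) else 0).PosSemidef) ∧
      ∀ i, QueryBounded (3 * a)⁻¹ (fun z => z.1 i) k := by
  obtain ⟨Γ, δ, hΓ, hvalue, hδ, hΓδ, hquery⟩ := exists_adversary_matrix h ha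
  have hk : ((4 / 3 : ℝ) • 1 - (1 / 3 : ℝ) • Γ - 1).PosSemidef := by
    convert hΓ.smul (show (0 : ℝ) ≤ 1 / 3 by norm_num) using 1
    module
  refine ⟨(4 / 3 : ℝ) • 1 - (1 / 3 : ℝ) • Γ, δ, hδ, ?_, hk,
    posSemidef_sub_diagonal_class hΓ hvalue, fun i => ?_⟩
  · simp only [sub_mulVec, smul_mulVec, one_mulVec, dotProduct_sub, dotProduct_smul, hδ, hΓδ,
      smul_eq_mul]
    norm_num
  · rw [show (3 * a)⁻¹ = 1 / 3 * a⁻¹ by ring]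
    refine queryBounded_of_posSemidef hvalue (hquery i) (by norm_num) hk ?_
    ext x y
    obtain rfl | hxy := eq_or_ne x y
    · simp [disagreePart]
    · simp only [disagreePart, of_apply, Matrix.sub_apply, Matrix.neg_apply, Matrix.smul_apply,
        one_apply_ne hxy, smul_eq_mul]
      split_ifs <;> ring

end AdversaryKernel

/-! ### Query weights and the hybrid argument -/

section Indicator

variable {τ : Type*} [Fintype τ]

theorem norm_indicator_le (s : Set τ) (v : τ → ℂ) : ‖s.indicator v‖₂ ≤ ‖v‖₂ := by
  refine le_of_sq_le_sq ?_ (norm_nonneg _)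
  rw [← sum_norm_sq_eq, ← sum_norm_sq_eq]
  gcongr
  exact norm_indicator_le_norm_self _ _

theorem norm_indicator_sq_sub_le {u v : τ → ℂ} (hu : ‖u‖₂ = 1) (hv : ‖v‖₂ = 1) (s : Set τ) :
    ‖s.indicator u‖₂ ^ 2 - ‖s.indicator v‖₂ ^ 2 ≤ 2 * ‖u - v‖₂ := by
  have hsub : ‖s.indicator u‖₂ - ‖s.indicator v‖₂ ≤ ‖u - v‖₂ :=
    calc _ ≤ ‖s.indicator (u - v)‖₂ := by
          rw [Set.indicator_sub', WithLp.toLp_sub]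
          exact norm_sub_norm_le _ _
      _ ≤ ‖u - v‖₂ := norm_indicator_le s _
  have hadd : ‖s.indicator u‖₂ + ‖s.indicator v‖₂ ≤ 2 := by
    linarith [norm_indicator_le s u, norm_indicator_le s v]
  rw [sq_sub_sq, mul_comm (_ + _)]
  calc _ ≤ ‖u - v‖₂ * (‖s.indicator u‖₂ + ‖s.indicator v‖₂) := by gcongr
    _ ≤ ‖u - v‖₂ * 2 := by gcongr
    _ = 2 * ‖u - v‖₂ := mul_comm _ _

end Indicator

section QueryPart

variable {ι : Type} {α : ι → ℕ} {W : ℕ}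

/-- The component of a state which queries a position in `S`; its squared norm is the weight of the
next query on `S`. -/
noncomputable def queryPart (S : Set ι) (v : QIdx ι α W → ℂ) : QIdx ι α W → ℂ :=
  ((fun h => h.1.1) ⁻¹' S).indicator v

theorem queryPart_smul (S : Set ι) (r : ℂ) (v : QIdx ι α W → ℂ) :
    queryPart S (r • v) = r • queryPart S v :=
  Set.indicator_const_smul _ r v

theorem star_queryPart_dotProduct_queryPart [Fintype ι] (S : Set ι) (u v : QIdx ι α W → ℂ) :
    star (queryPart S u) ⬝ᵥ queryPart S v =
      ∑ i, S.indicator (fun i => star (queryPart {i} u) ⬝ᵥ queryPart {i} v) i := by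
  have hterm (i : ι) : S.indicator (fun i => star (queryPart {i} u) ⬝ᵥ queryPart {i} v) i =
      ∑ h, S.indicator (fun i => star (queryPart {i} u h) * queryPart {i} v h) i := by
    by_cases hi : i ∈ S <;> simp [hi, dotProduct]
  simp only [hterm]
  rw [Finset.sum_comm]
  refine Finset.sum_congr rfl fun h _ => ?_
  rw [Fintype.sum_eq_single h.1.1 fun i hi => by simp [queryPart, hi.symm]]
  by_cases hh : h.1.1 ∈ S <;> simp [queryPart, hh]

theorem norm_queryPart_sq [Fintype ι] (S : Set ι) (v : QIdx ι α W → ℂ) :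
    ‖queryPart S v‖₂ ^ 2 = ∑ i, S.indicator (fun i => ‖queryPart {i} v‖₂ ^ 2) i := by
  classical
  have h := star_queryPart_dotProduct_queryPart S v v
  simp only [star_dotProduct_self, Set.indicator_apply, ← Complex.ofReal_zero,
    ← apply_ite Complex.ofReal] at h
  simp only [Set.indicator_apply]
  exact_mod_cast h

variable [Fintype ι] [DecidableEq ι]

theorem oracleMatrix_mulVec_apply (x : Input ι α) (v : QIdx ι α W → ℂ) (h : QIdx ι α W) :
    (oracleMatrix W x *ᵥ v) h = v (⟨h.1.1, h.1.2 - x h.1.1⟩, h.2) := by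
  rw [oracleMatrix_eq_permMatrix, permMatrix_mulVec]
  rfl

theorem queryPart_oracleMatrix_mulVec (S : Set ι) (x : Input ι α) (v : QIdx ι α W → ℂ) :
    queryPart S (oracleMatrix W x *ᵥ v) = oracleMatrix W x *ᵥ queryPart S v := by
  classical
  ext h
  simp only [queryPart, Set.indicator_apply, oracleMatrix_mulVec_apply, Set.mem_preimage]

theorem oracleMatrix_mulVec_queryPart_congr {S : Set ι} {x y : Input ι α} (hxy : ∀ i ∈ S, x i = y i)
    (v : QIdx ι α W → ℂ) :
    oracleMatrix W x *ᵥ queryPart S v = oracleMatrix W y *ᵥ queryPart S v := by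
  classical
  ext h
  simp only [queryPart, Set.indicator_apply, oracleMatrix_mulVec_apply, Set.mem_preimage]
  split_ifs with hS
  · rw [hxy _ hS]
  · rfl

theorem oracleMatrix_mulVec_sub {S : Set ι} {x y : Input ι α} (hxy : ∀ i ∉ S, x i = y i)
    (v : QIdx ι α W → ℂ) :
    oracleMatrix W x *ᵥ v - oracleMatrix W y *ᵥ v =
      oracleMatrix W x *ᵥ queryPart S v - oracleMatrix W y *ᵥ queryPart S v := by
  have hsplit : v = queryPart S v + queryPart Sᶜ v := (Set.indicator_self_add_compl _ v).symm
  conv_lhs => rw [hsplit]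
  rw [mulVec_add, mulVec_add, oracleMatrix_mulVec_queryPart_congr (S := Sᶜ) hxy,
    add_sub_add_right_eq_sub]

end QueryPart

section Hybrid

variable {ι : Type} [Fintype ι] [DecidableEq ι] {α : ι → ℕ}

/-- The state of the algorithm after `t` queries and the unitary following them. -/
noncomputable def QAlg.state (A : QAlg ι α) (x : Input ι α) (t : ℕ) : QIdx ι α A.W → ℂ :=
  qProd A.U (oracleMatrix A.W x) t *ᵥ A.init

theorem QAlg.state_succ (A : QAlg ι α) (x : Input ι α) (t : ℕ) :
    A.state x (t + 1) = A.U (t + 1) *ᵥ (oracleMatrix A.W x *ᵥ A.state x t) := by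
  simp only [QAlg.state, qProd, mulVec_mulVec, Matrix.mul_assoc]

theorem QAlg.norm_state (A : QAlg ι α) (x : Input ι α) (t : ℕ) : ‖A.state x t‖₂ = 1 := by
  rw [QAlg.state, norm_mulVec (qProd_mem_unitaryGroup A.unitary
    (oracleMatrix_mem_unitaryGroup _ _) _),
    ← pow_eq_one_iff_of_nonneg (norm_nonneg _) two_ne_zero, ← sum_norm_sq_eq, A.init_norm]

theorem QAlg.outProb_eq_norm_sq (A : QAlg ι α) (x : Input ι α) (b : Option Bool) :
    A.outProb x b = ‖{j | A.out j = b}.indicator (A.state x A.T)‖₂ ^ 2 := by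
  classical
  rw [← sum_norm_sq_eq]
  refine Finset.sum_congr rfl fun j _ => ?_
  simp only [Set.indicator_apply, Set.mem_ofPred_eq]
  split_ifs <;> simp [QAlg.finalState, QAlg.state]

theorem QAlg.outProb_true_add_outProb_false_le_one (A : QAlg ι α) (x : Input ι α) :
    A.outProb x (some true) + A.outProb x (some false) ≤ 1 := by
  rw [← one_pow 2, ← A.norm_state x A.T, ← sum_norm_sq_eq, QAlg.outProb, QAlg.outProb,
    ← Finset.sum_add_distrib]
  refine Finset.sum_le_sum fun j _ => ?_
  obtain _ | _ | _ := A.out j <;> simp [QAlg.finalState, QAlg.state]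

theorem QAlg.norm_state_sub_le (A : QAlg ι α) {S : Set ι} {x y : Input ι α}
    (hxy : ∀ i ∉ S, y i = x i) (t : ℕ) :
    ‖A.state y t - A.state x t‖₂ ≤ ∑ j ∈ Finset.range t, 2 * ‖queryPart S (A.state x j)‖₂ := by
  induction t with
  | zero => simp [QAlg.state, qProd]
  | succ t ih =>
    have hO := oracleMatrix_mem_unitaryGroup (α := α) A.W
    have hstep : A.state y (t + 1) - A.state x (t + 1) =
        A.U (t + 1) *ᵥ (oracleMatrix A.W y *ᵥ (A.state y t - A.state x t) +
          (oracleMatrix A.W y *ᵥ queryPart S (A.state x t) -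
            oracleMatrix A.W x *ᵥ queryPart S (A.state x t))) := by
      rw [A.state_succ, A.state_succ, ← oracleMatrix_mulVec_sub hxy, mulVec_sub (oracleMatrix _ _),
        sub_add_sub_cancel, mulVec_sub]
    rw [Finset.sum_range_succ, hstep, norm_mulVec (A.unitary _), WithLp.toLp_add, WithLp.toLp_sub]
    refine (norm_add_le _ _).trans (add_le_add ?_ ((norm_sub_le _ _).trans ?_))
    · rwa [norm_mulVec (hO y)]
    · rw [norm_mulVec (hO y), norm_mulVec (hO x), two_mul]

theorem QAlg.query_weight_ge (A : QAlg ι α) {S : Set ι} {x y : Input ι α} (hxy : ∀ i ∉ S, y i = x i)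
    (hx : (2 : ℝ) / 3 ≤ A.outProb x (some false)) (hy : (2 : ℝ) / 3 ≤ A.outProb y (some true)) :
    1 / 144 ≤ A.T * ∑ t ∈ Finset.range A.T, ‖queryPart S (A.state x t)‖₂ ^ 2 := by
  have hprob : 1 / 3 ≤ A.outProb y (some true) - A.outProb x (some true) := by
    linarith [A.outProb_true_add_outProb_false_le_one x]
  rw [A.outProb_eq_norm_sq, A.outProb_eq_norm_sq] at hprob
  have hdist := (hprob.trans (norm_indicator_sq_sub_le (A.norm_state y A.T)
    (A.norm_state x A.T) _)).trans
    (mul_le_mul_of_nonneg_left (A.norm_state_sub_le hxy A.T) two_pos.le)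
  rw [← Finset.mul_sum] at hdist
  calc (1 / 144 : ℝ) ≤ (∑ t ∈ Finset.range A.T, ‖queryPart S (A.state x t)‖₂) ^ 2 := by nlinarith
    _ ≤ A.T * ∑ t ∈ Finset.range A.T, ‖queryPart S (A.state x t)‖₂ ^ 2 := by
      simpa using sq_sum_le_card_mul_sum_sq (s := Finset.range A.T)
        (f := fun t => ‖queryPart S (A.state x t)‖₂)

end Hybrid

section ProgressGrowth

variable {ι : Type} [Fintype ι] {α : ι → ℕ} {W : ℕ} {Y : Type*} [Fintype Y]
  {K : Matrix Y Y ℝ}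

theorem progress_eq_sum_queryPart (K : Matrix Y Y ℝ) (Ψ : Y → QIdx ι α W → ℂ) :
    progress K Ψ = ∑ i, progress K fun x => queryPart {i} (Ψ x) := by
  have hinner (u v : QIdx ι α W → ℂ) :
      star u ⬝ᵥ v = ∑ i, star (queryPart {i} u) ⬝ᵥ queryPart {i} v := by
    simpa [queryPart] using star_queryPart_dotProduct_queryPart Set.univ u v
  simp only [progress]
  conv_rhs => rw [Finset.sum_comm]
  refine Finset.sum_congr rfl fun x _ => ?_
  conv_rhs => rw [Finset.sum_comm]
  refine Finset.sum_congr rfl fun y _ => ?_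
  rw [hinner, Complex.re_sum, Finset.mul_sum]

theorem mul_sum_norm_queryPart_sq_le_progress {B : Type*} [DecidableEq B] [DecidableEq Y]
    {b : Y → B} {S : B → Set ι} (hS : Pairwise (Function.onFun Disjoint S)) {C : ℝ}
    (hKpos : K.PosSemidef)
    (hK : ∀ β, (K - diagonal fun x => if b x = β then C else 0).PosSemidef)
    (Ψ : Y → QIdx ι α W → ℂ) :
    C * ∑ x, ‖queryPart (S (b x)) (Ψ x)‖₂ ^ 2 ≤ progress K Ψ := by
  simp only [norm_queryPart_sq (S _)]
  rw [progress_eq_sum_queryPart, Finset.sum_comm, Finset.mul_sum]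
  refine Finset.sum_le_sum fun i _ => ?_
  by_cases hi : ∃ β, i ∈ S β
  · obtain ⟨β, hβ⟩ := hi
    have hmem (β' : B) : i ∈ S β' ↔ β' = β :=
      ⟨fun h => by_contra fun hne => Set.disjoint_left.1 (hS hne) h hβ, fun h => h ▸ hβ⟩
    refine le_of_eq_of_le ?_ (progress_mono (hK β) _)
    rw [progress_diagonal, Finset.mul_sum]
    refine Finset.sum_congr rfl fun x _ => ?_
    by_cases hx : b x = β
    · rw [Set.indicator_of_mem ((hmem _).2 hx), if_pos hx]
    · rw [Set.indicator_of_notMem (mt (hmem _).1 hx), if_neg hx, mul_zero, zero_mul]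
  · push Not at hi
    simpa [hi] using progress_nonneg hKpos _

variable [DecidableEq ι]

theorem progress_oracleMatrix_mulVec_le {z : Y → Input ι α} {θ : ℝ} (hθ : 0 ≤ θ)
    (hK : ∀ i, QueryBounded θ (fun x => z x i) K) (Ψ : Y → QIdx ι α W → ℂ) :
    progress K (fun x => oracleMatrix W (z x) *ᵥ Ψ x) ≤ (1 + 2 * θ) * progress K Ψ := by
  rw [progress_eq_sum_queryPart, progress_eq_sum_queryPart K Ψ, Finset.mul_sum]
  refine Finset.sum_le_sum fun i _ => (hK i).progress_le hθ fun x y hxy => ?_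
  have hagree : ∀ j ∈ ({i} : Set ι), z x j = z y j := by simpa using hxy
  rw [queryPart_oracleMatrix_mulVec, queryPart_oracleMatrix_mulVec,
    oracleMatrix_mulVec_queryPart_congr hagree,
    star_mulVec_dotProduct_mulVec (oracleMatrix_mem_unitaryGroup _ _)]

theorem progress_qProd_mulVec_le {U : ℕ → Matrix (QIdx ι α W) (QIdx ι α W) ℂ}
    (hU : ∀ t, U t ∈ unitaryGroup (QIdx ι α W) ℂ) {z : Y → Input ι α} {θ : ℝ} (hθ : 0 ≤ θ)
    (hK : ∀ i, QueryBounded θ (fun x => z x i) K) (Ψ : Y → QIdx ι α W → ℂ) (t : ℕ) :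
    progress K (fun x => qProd U (oracleMatrix W (z x)) t *ᵥ Ψ x) ≤
      (1 + 2 * θ) ^ t * progress K Ψ := by
  induction t with
  | zero => simp [qProd, progress_mulVec K (hU 0)]
  | succ t ih =>
    simp only [qProd, Matrix.mul_assoc, ← mulVec_mulVec]
    rw [progress_mulVec K (hU _), pow_succ', mul_assoc]
    exact (progress_oracleMatrix_mulVec_le hθ hK _).trans
      (mul_le_mul_of_nonneg_left ih (by positivity))

end ProgressGrowth

section KernelBound

variable {ι : Type} [Fintype ι] [DecidableEq ι] {α : ι → ℕ} (A : QAlg ι α)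
  {Y B : Type*} [Fintype Y] {z z' : Y → Input ι α} {b : Y → B} {S : B → Set ι}
  {d : Y → ℝ}

theorem QAlg.average_query_weight_ge (hz : ∀ y, ∀ i ∉ S (b y), z' y i = z y i)
    (h : ∀ y, (2 : ℝ) / 3 ≤ A.outProb (z y) (some false))
    (h' : ∀ y, (2 : ℝ) / 3 ≤ A.outProb (z' y) (some true)) (hd : d ⬝ᵥ d = 1) :
    1 / 144 ≤ A.T * ∑ t ∈ Finset.range A.T,
      ∑ y, d y ^ 2 * ‖queryPart (S (b y)) (A.state (z y) t)‖₂ ^ 2 := by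
  have hsum : ∑ y, d y ^ 2 = 1 := by simpa only [dotProduct, sq] using hd
  calc (1 / 144 : ℝ) = ∑ y, d y ^ 2 * (1 / 144) := by rw [← Finset.sum_mul, hsum, one_mul]
    _ ≤ ∑ y, d y ^ 2 * (A.T * ∑ t ∈ Finset.range A.T,
          ‖queryPart (S (b y)) (A.state (z y) t)‖₂ ^ 2) := by
      gcongr with y
      exact A.query_weight_ge (hz y) (h y) (h' y)
    _ = _ := by
      simp only [Finset.mul_sum]
      rw [Finset.sum_comm]
      exact Finset.sum_congr rfl fun t _ => Finset.sum_congr rfl fun y _ => mul_left_comm _ _ _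

variable [DecidableEq Y] [DecidableEq B] {K : Matrix Y Y ℝ} {C θ : ℝ}

theorem QAlg.mul_average_query_weight_le (hS : Pairwise (Function.onFun Disjoint S))
    (hK : K.PosSemidef)
    (hKb : ∀ β, (K - diagonal fun y => if b y = β then C else 0).PosSemidef) (hθ : 0 ≤ θ)
    (hKz : ∀ i, QueryBounded θ (fun y => z y i) K) (t : ℕ) :
    C * ∑ y, d y ^ 2 * ‖queryPart (S (b y)) (A.state (z y) t)‖₂ ^ 2 ≤
      (1 + 2 * θ) ^ t * (d ⬝ᵥ K *ᵥ d) := by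
  have hpart (y : Y) : ‖queryPart (S (b y)) ((d y : ℂ) • A.state (z y) t)‖₂ ^ 2 =
      d y ^ 2 * ‖queryPart (S (b y)) (A.state (z y) t)‖₂ ^ 2 := by
    rw [queryPart_smul, WithLp.toLp_smul, norm_smul, Complex.norm_real, mul_pow, Real.norm_eq_abs,
      sq_abs]
  have hinit : ‖A.init‖₂ ^ 2 = 1 := by rw [← sum_norm_sq_eq, A.init_norm]
  calc _ = C * ∑ y, ‖queryPart (S (b y)) ((d y : ℂ) • A.state (z y) t)‖₂ ^ 2 := by
        simp only [hpart]
    _ ≤ progress K fun y => (d y : ℂ) • A.state (z y) t :=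
      mul_sum_norm_queryPart_sq_le_progress hS hK hKb _
    _ ≤ (1 + 2 * θ) ^ t * progress K fun y => (d y : ℂ) • A.init := by
      simp only [QAlg.state, ← mulVec_smul]
      exact progress_qProd_mulVec_le A.unitary hθ hKz _ t
    _ = (1 + 2 * θ) ^ t * (d ⬝ᵥ K *ᵥ d) := by rw [progress_ofReal_smul, hinit, mul_one]

/-- An algorithm which tells `z y` from `z' y` has to query the set `S (b y)` where they differ, and
so it locates this set; the kernel `K` bounds the success at this search. -/
theorem QAlg.le_sq_mul_pow_of_kernel (hz : ∀ y, ∀ i ∉ S (b y), z' y i = z y i)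
    (h : ∀ y, (2 : ℝ) / 3 ≤ A.outProb (z y) (some false))
    (h' : ∀ y, (2 : ℝ) / 3 ≤ A.outProb (z' y) (some true))
    (hS : Pairwise (Function.onFun Disjoint S)) (hd : d ⬝ᵥ d = 1) (hKd : d ⬝ᵥ K *ᵥ d = 1)
    (hK : K.PosSemidef) (hC : 0 ≤ C)
    (hKb : ∀ β, (K - diagonal fun y => if b y = β then C else 0).PosSemidef) (hθ : 0 ≤ θ)
    (hKz : ∀ i, QueryBounded θ (fun y => z y i) K) :
    C ≤ 144 * A.T ^ 2 * (1 + 2 * θ) ^ A.T := by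
  let w (t : ℕ) : ℝ := ∑ y, d y ^ 2 * ‖queryPart (S (b y)) (A.state (z y) t)‖₂ ^ 2
  have hw (t : ℕ) (ht : t ∈ Finset.range A.T) : C * w t ≤ (1 + 2 * θ) ^ A.T := by
    refine (A.mul_average_query_weight_le hS hK hKb hθ hKz t).trans ?_
    rw [hKd, mul_one]
    exact pow_le_pow_right₀ (by linarith) (Finset.mem_range.1 ht).le
  calc C = 144 * (C * (1 / 144)) := by ring
    _ ≤ 144 * (C * (A.T * ∑ t ∈ Finset.range A.T, w t)) := by
      gcongr
      exact A.average_query_weight_ge hz h h' hd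
    _ = 144 * (A.T * ∑ t ∈ Finset.range A.T, C * w t) := by rw [← Finset.mul_sum]; ring
    _ ≤ 144 * (A.T * ∑ t ∈ Finset.range A.T, (1 + 2 * θ) ^ A.T) := by
      gcongr with t ht
      exact hw t ht
    _ = 144 * A.T ^ 2 * (1 + 2 * θ) ^ A.T := by
      rw [Finset.sum_const, Finset.card_range, nsmul_eq_mul]
      ring

end KernelBound

/-! ### Cheat sheet inputs -/

section CheatSheet

theorem binToFin_injective (c : ℕ) : Function.Injective (binToFin c) := by
  have hbin (b : Fin c → Bool) :
      binToFin c b = finFunctionFinEquiv fun i => if b i then (1 : Fin 2) else 0 := by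
    have hval : (finFunctionFinEquiv (fun i => if b i then (1 : Fin 2) else 0) : ℕ) =
        ∑ i, if b i then 2 ^ (i : ℕ) else 0 := by
      rw [finFunctionFinEquiv_apply]
      exact Finset.sum_congr rfl fun i _ => by split_ifs <;> simp
    refine Fin.ext (Eq.trans ?_ hval.symm)
    exact Nat.mod_eq_of_lt (hval ▸ Fin.is_lt _)
  intro b b' h
  simp only [hbin, EmbeddingLike.apply_eq_iff_eq] at h
  funext i
  have hi := congrFun h i
  cases hb : b i <;> cases hb' : b' i <;> simp_all

variable {ι : Type} {α : ι → ℕ} {c k : ℕ}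

/-- The cheat sheet input with copies `x` and cells `y`. -/
def csInput (x : Fin c → Input ι α) (y : Fin (2 ^ c) → Fin c → Fin k → Fin 2) :
    Input (CSIdx ι c k) (csAlphabet α c k)
  | Sum.inl p => x p.1 p.2
  | Sum.inr q => y q.1 q.2.1 q.2.2

/-- The indices of the cheat sheet cell with address `β`. -/
def cell (ι : Type) (k : ℕ) (β : Fin c → Bool) : Set (CSIdx ι c k) :=
  Set.range fun q => Sum.inr (binToFin c β, q)

theorem pairwise_disjoint_cell :
    Pairwise (Function.onFun Disjoint (cell ι k : (Fin c → Bool) → Set (CSIdx ι c k))) := by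
  intro β β' hβ
  rw [Function.onFun, Set.disjoint_left]
  rintro _ ⟨q, rfl⟩ ⟨q', hq'⟩
  exact hβ (binToFin_injective c (Prod.ext_iff.1 (Sum.inr.inj hq')).1.symm)

variable {f : PartialFn ι α} {φ : Input ι α → (Fin k → Fin 2) → Bool}

theorem cheatSheet_csInput_zero (hc : 0 < c) (hφ : ∀ x, φ x (fun _ => 0) = false)
    (x : Fin c → Input ι α) : cheatSheet c f φ (csInput x 0) = some false := by
  simp only [cheatSheet, ofProp, Option.some.injEq, decide_eq_false_iff_not]
  rintro ⟨β, -, hacc⟩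
  exact Bool.false_ne_true ((hφ _).symm.trans (hacc ⟨0, hc⟩))

theorem cheatSheet_csInput_eq_true (x : Fin c → Dom f)
    {y : Fin (2 ^ c) → Fin c → Fin k → Fin 2}
    (hy : ∀ l, φ (x l).1 (y (binToFin c fun l => value f (x l)) l) = true) :
    cheatSheet c f φ (csInput (fun l => (x l).1) y) = some true := by
  simp only [cheatSheet, ofProp, Option.some.injEq, decide_eq_true_eq]
  exact ⟨fun l => value f (x l), fun l => apply_eq_some_value f (x l), hy⟩

theorem csInput_eq_of_notMem_cell (x : Fin c → Input ι α) {β : Fin c → Bool}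
    {y y' : Fin (2 ^ c) → Fin c → Fin k → Fin 2} (hy : ∀ ℓ ≠ binToFin c β, y ℓ = y' ℓ)
    {i : CSIdx ι c k} (hi : i ∉ cell ι k β) : csInput x y i = csInput x y' i := by
  obtain p | ⟨ℓ, q⟩ := i
  · rfl
  · exact congrFun₂ (hy ℓ fun h => hi ⟨q, by rw [h]⟩) q.1 q.2

theorem QueryBounded.const {Y S : Type*} [DecidableEq S] {K : Matrix Y Y ℝ} (hK : K.PosSemidef)
    (θ : ℝ) (s : S) : QueryBounded θ (fun _ => s) K := by
  have hpart (L : Matrix Y Y ℝ) : disagreePart (fun _ => s) L = 0 := by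
    ext
    simp [disagreePart]
  refine ⟨0, hpart 0, ?_, ?_, ?_⟩ <;> simp [hpart, hK, PosSemidef.zero]

theorem posSemidef_prodKernel_sub_diagonal {X κ B : Type*} [Fintype κ] [Finite X] [DecidableEq X]
    [DecidableEq B] {k : Matrix X X ℝ} {g : X → B} {r : ℝ} (hr : 0 ≤ r)
    (hk : ∀ b, (k - diagonal fun x => if g x = b then r else 0).PosSemidef) (β : κ → B) :
    (prodKernel (fun _ => k) - diagonal fun x : κ → X =>
      if (fun l => g (x l)) = β then r ^ Fintype.card κ else 0).PosSemidef := by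
  have hdiag := prodKernel_diagonal fun (l : κ) x => if g x = β l then r else 0
  convert posSemidef_prodKernel_sub (fun l => ?_) fun l => hk (β l) using 1
  · rw [hdiag]
    congr 2
    funext x
    simp [Finset.prod_ite_zero, funext_iff]
  · exact PosSemidef.diagonal fun x => by dsimp only [Pi.zero_apply]; split_ifs <;> simp [hr]

theorem queryBounded_csInput_zero [Finite (Dom f)] {θ : ℝ} {K : Matrix (Dom f) (Dom f) ℝ}
    (hK : K.PosSemidef) (hKq : ∀ i, QueryBounded θ (fun z => z.1 i) K) (i : CSIdx ι c k) :
    QueryBounded θ (fun x : Fin c → Dom f => csInput (fun l => (x l).1) (k := k) 0 i)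
      (prodKernel fun _ => K) := by
  obtain ⟨l, i⟩ | q := i
  · exact (hKq i).prodKernel (k := fun _ => K) (l := l) fun _ => hK
  · exact QueryBounded.const (posSemidef_prodKernel fun _ => hK) θ _

/-- Telling the blank cheat sheet from the cheat sheet with certificates at the address given by the
values of the copies amounts to the computation of all these values. -/
theorem QAlg.Computes.pow_le_of_not_dualFeasible [Fintype ι] [DecidableEq ι] {hk : 0 < k}
    (hφ : IsCertifying hk f φ) (hc : 0 < c) {a : ℝ} (ha : 0 < a) (h : ¬DualFeasible f a)
    {A : QAlg (CSIdx ι c k) (csAlphabet α c k)} (hA : A.Computes (cheatSheet c f φ)) :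
    (5 / 4 : ℝ) ^ c ≤ 144 * A.T ^ 2 * (1 + 2 * (3 * a)⁻¹) ^ A.T := by
  classical
  obtain ⟨K, δ, hδ, hKδ, hK, hKb, hKq⟩ := exists_kernel_of_not_dualFeasible h ha
  choose cert hcert using fun x : Dom f => hφ.2.2.1 x.1 _ (apply_eq_some_value f x)
  let b (x : Fin c → Dom f) (l : Fin c) : Bool := value f (x l)
  let y (x : Fin c → Dom f) : Fin (2 ^ c) → Fin c → Fin k → Fin 2 :=
    Pi.single (binToFin c (b x)) fun l => cert (x l)
  have hy (x : Fin c → Dom f) (l : Fin c) :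
      y x (binToFin c fun l => value f (x l)) l = cert (x l) := by
    simp only [y, b, Pi.single_eq_same]
  have hK0 : K.PosSemidef := by simpa using hK.add PosSemidef.one
  refine A.le_sq_mul_pow_of_kernel (z := fun x => csInput (fun l => (x l).1) 0)
    (z' := fun x => csInput (fun l => (x l).1) (y x)) (b := b) (S := cell ι k)
    (d := fun x => ∏ l, δ (x l)) (K := prodKernel fun _ => K)
    (fun x i hi => csInput_eq_of_notMem_cell _ (fun ℓ hℓ => Pi.single_eq_of_ne hℓ _) hi)
    (fun x => hA _ _ (cheatSheet_csInput_zero hc hφ.2.2.2 _))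
    (fun x => hA _ _ (cheatSheet_csInput_eq_true x fun l => ?_))
    pairwise_disjoint_cell ?_ ?_ (posSemidef_prodKernel fun _ => hK0) (by positivity)
    (fun β => ?_) (by positivity) (queryBounded_csInput_zero hK0 hKq)
  · rw [hy, hcert]
  · rw [prod_dotProduct_prod, hδ, Finset.prod_const_one]
  · rw [dotProduct_prodKernel_mulVec, hKδ, Finset.prod_const_one]
  · simpa using posSemidef_prodKernel_sub_diagonal (by norm_num) hKb β

end CheatSheet

/-! ### The lower bound -/

section LowerBound

variable {ι : Type} [Fintype ι] [DecidableEq ι] {α : ι → ℕ}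

theorem QAlg.nonempty_index (A : QAlg ι α) : Nonempty ι := by
  obtain ⟨j, -, -⟩ := Finset.exists_ne_zero_of_sum_ne_zero (A.init_norm.trans_ne one_ne_zero)
  exact ⟨j.1.1⟩

theorem nonempty_dom_of_Qq_ne_zero {f : PartialFn ι α} (h : Qq f ≠ 0) : Nonempty (Dom f) := by
  by_contra! hf
  obtain ⟨_, A, -, -⟩ := Nat.nonempty_of_pos_sInf (Nat.pos_of_ne_zero h)
  have hA : QAlg.Computes { A with T := 0 } f := fun x b hx =>
    (hf.false ⟨x, Option.isSome_iff_exists.2 ⟨b, hx⟩⟩).elim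
  exact h (Nat.le_zero.1 hA.Qq_le)

theorem exists_computes [Nonempty ι] [∀ i, NeZero (α i)] (f : PartialFn ι α) :
    ∃ A : QAlg ι α, A.Computes f := by
  obtain ⟨A, -, hA⟩ := (dualFeasible_card f).exists_qAlg Fintype.card_pos
  exact ⟨A, hA⟩

theorem QAlg.Computes.T_pos {A : QAlg ι α} {f : PartialFn ι α} (hA : A.Computes f)
    {x y : Input ι α} (hx : f x = some false) (hy : f y = some true) : 0 < A.T := by
  by_contra! hT
  have h := A.query_weight_ge (S := Set.univ) (fun i hi => (hi trivial).elim) (hA x _ hx)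
    (hA y _ hy)
  norm_num [Nat.le_zero.1 hT] at h

theorem sq_mul_pow_lt_four_pow_log {n T : ℕ} (hT : 0 < T) (hTn : 40 * T < n) :
    144 * (T : ℝ) ^ 2 * (1 + 2 * (3 * (40 * T : ℝ))⁻¹) ^ T < 4 ^ Nat.log 2 n := by
  have hT0 : (0 : ℝ) < T := Nat.cast_pos.2 hT
  have hexp : (1 + 2 * (3 * (40 * T : ℝ))⁻¹) ^ T ≤ 2 := by
    calc (1 + 2 * (3 * (40 * T : ℝ))⁻¹) ^ T = (1 - -(1 / 60) / T) ^ T := by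
          congr 1
          field_simp
          ring
      _ ≤ Real.exp (- -(1 / 60)) := Real.one_sub_div_pow_le_exp_neg (by linarith)
      _ ≤ 2 := by
          have := Real.exp_bound_div_one_sub_of_interval (x := 1 / 60) (by norm_num) (by norm_num)
          norm_num at this ⊢
          linarith
  have hlog : 40 * (T : ℝ) ≤ 2 * 2 ^ Nat.log 2 n := by
    rw [← pow_succ']
    exact_mod_cast (hTn.trans (Nat.lt_pow_succ_log_self one_lt_two n)).le
  calc 144 * (T : ℝ) ^ 2 * (1 + 2 * (3 * (40 * T : ℝ))⁻¹) ^ T ≤ 144 * (T : ℝ) ^ 2 * 2 := by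
        gcongr
    _ < (20 * (T : ℝ)) ^ 2 := by nlinarith
    _ ≤ ((2 : ℝ) ^ Nat.log 2 n) ^ 2 := by gcongr; linarith
    _ = 4 ^ Nat.log 2 n := by rw [← pow_mul, mul_comm, pow_mul]; norm_num

variable {c k : ℕ} {hk : 0 < k} {f : PartialFn ι α}
  {φ : Input ι α → (Fin k → Fin 2) → Bool} {A : QAlg (CSIdx ι c k) (csAlphabet α c k)}

theorem QAlg.Computes.T_pos_of_cheatSheet [Nonempty (Dom f)] (hφ : IsCertifying hk f φ)
    (hc : 0 < c) (hA : A.Computes (cheatSheet c f φ)) : 0 < A.T := by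
  obtain ⟨x⟩ := ‹Nonempty (Dom f)›
  obtain ⟨y, hy⟩ := hφ.2.2.1 x.1 _ (apply_eq_some_value f x)
  exact hA.T_pos (cheatSheet_csInput_zero hc hφ.2.2.2 fun _ => x.1)
    (cheatSheet_csInput_eq_true (fun _ => x) (y := fun _ _ => y) fun _ => hy)

theorem QAlg.Computes.dualFeasible_of_cheatSheet [Nonempty (Dom f)] (hφ : IsCertifying hk f φ)
    (hc : 0 < c) (hcard : 10 * Nat.log 2 (Fintype.card ι) ≤ c)
    (hA : A.Computes (cheatSheet c f φ)) : DualFeasible f (40 * A.T) := by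
  have hT := hA.T_pos_of_cheatSheet hφ hc
  obtain hle | hlt := le_or_gt (Fintype.card ι) (40 * A.T)
  · exact (dualFeasible_card f).mono (by exact_mod_cast hle)
  by_contra h
  refine (sq_mul_pow_lt_four_pow_log hT hlt).not_ge ?_
  calc (4 : ℝ) ^ Nat.log 2 (Fintype.card ι) ≤ ((5 / 4) ^ 10) ^ Nat.log 2 (Fintype.card ι) := by
        gcongr
        norm_num
    _ = (5 / 4) ^ (10 * Nat.log 2 (Fintype.card ι)) := (pow_mul _ _ _).symm
    _ ≤ (5 / 4) ^ c := pow_le_pow_right₀ (by norm_num) hcard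
    _ ≤ _ := hA.pow_le_of_not_dualFeasible hφ hc (by positivity) h

end LowerBound

end QC

theorem cheat_sheet_quantum_lower_bound_general :
    ∃ C : ℝ, 0 < C ∧ ∀ (ι : Type) [Fintype ι] [DecidableEq ι] (α : ι → ℕ) (c k : ℕ) (hk : 0 < k)
      (f : QC.PartialFn ι α) (φ : QC.Input ι α → (Fin k → Fin 2) → Bool),
      QC.IsCertifying hk f φ → 0 < c → 10 * Nat.log 2 (Fintype.card ι) ≤ c →
      C * (QC.Qq f : ℝ) ≤ (QC.Qq (QC.cheatSheet c f φ) : ℝ) := by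
  refine ⟨1 / 4000, by norm_num, fun ι _ _ α c k hk f φ hφ hc hcard => ?_⟩
  obtain hf | hf := eq_or_ne (QC.Qq f) 0
  · simp [hf]
  have hdom := QC.nonempty_dom_of_Qq_ne_zero hf
  obtain ⟨_, A₀, -, -⟩ := Nat.nonempty_of_pos_sInf (Nat.pos_of_ne_zero hf)
  have := A₀.nonempty_index
  have hα (i : ι) : NeZero (α i) := ⟨(hdom.some.1 i).pos.ne'⟩
  have : Nonempty (QC.CSIdx ι c k) := ⟨Sum.inl (⟨0, hc⟩, Classical.arbitrary ι)⟩
  have : ∀ i, NeZero (QC.csAlphabet α c k i) := Sum.rec (fun p => hα p.2) fun _ => ⟨two_ne_zero⟩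
  obtain ⟨_, hA₁⟩ := QC.exists_computes (QC.cheatSheet c f φ)
  obtain ⟨A, hT, hA⟩ := hA₁.exists_T_eq_Qq
  have hfeas : QC.DualFeasible f (40 * A.T : ℕ) := by
    exact_mod_cast hA.dualFeasible_of_cheatSheet hφ hc hcard
  have hpos := hA.T_pos_of_cheatSheet hφ hc
  obtain ⟨B, hBT, hB⟩ := hfeas.exists_qAlg (by lia)
  have hle : QC.Qq f ≤ 4000 * QC.Qq (QC.cheatSheet c f φ) := by
    have := hB.Qq_le
    lia
  have : (QC.Qq f : ℝ) ≤ 4000 * QC.Qq (QC.cheatSheet c f φ) := by exact_mod_cast hle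
  linarith

/-- For any partial `f : D → {0,1}` with `D ⊆ [M]^n` and any
certifying function `φ` for `f`, the cheat sheet version of `f` with
`c = 10·log₂ n` copies satisfies `Q(f_CS) = Ω(Q(f))`. -/
theorem cheat_sheet_quantum_lower_bound :
    ∃ C : ℝ, 0 < C ∧ ∀ (n M k : ℕ) (hk : 0 < k)
      (f : QC.PartialFn (Fin n) fun _ => M)
      (φ : QC.Input (Fin n) (fun _ => M) → (Fin k → Fin 2) → Bool),
      QC.IsCertifying hk f φ → 2 ≤ n →
      C * (QC.Qq f : ℝ) ≤ (QC.Qq (QC.cheatSheet (10 * Nat.log 2 n) f φ) : ℝ) := by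
  obtain ⟨C, hC, h⟩ := cheat_sheet_quantum_lower_bound_general
  refine ⟨C, hC, fun n M k hk f φ hφ hn => h _ _ _ k hk f φ hφ ?_ (by rw [Fintype.card_fin])⟩
  exact Nat.mul_pos (by norm_num) (Nat.log_pos one_lt_two hn)
end

section
/- Let f : D → {0,1} be a partial function with D ⊆ [M]^n, and let φ be a certifying function for f. Then D(f) ≤ C^{(1)}(φ)² and C(f) ≤ C^{(1)}(φ). Consequently, D(f) ≤ D(φ)² and C(f) ≤ C(φ). -/
open scoped BigOperators ENNReal

/-!
An accepted pair `(x, y)` is a 1-input of `φ`, and since the first bit of `y` records `f x`, a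
1-certificate of `φ` at `(x, y)`, restricted to the coordinates of `x`, forces both membership in
the domain of `f` and the value of `f`. This gives `C(f) ≤ C¹(φ)`.

For the deterministic bound, a certificate of a 0-input and a domain-forcing certificate of a
1-input must disagree at a common index, as otherwise some input would satisfy both. So repeatedly
query the certificate of some 1-input consistent with the answers so far: each round queries a new
index of the certificate of every 0-input still consistent, so `C¹(φ)` rounds suffice.
-/

namespace QC

variable {ι : Type} {α : ι → ℕ} {f : PartialFn ι α} {P P' : Set (Input ι α)} {d d' : ℕ}
  {x : Input ι α} {S : Finset ι}

/-- The subcube of all inputs that agree with `x` on `S`: the inputs consistent with the partial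
assignment which is `x` on `S` and undefined elsewhere. -/
def subcube (S : Finset ι) (x : Input ι α) : Set (Input ι α) := {y | ∀ i ∈ S, y i = x i}

lemma subcube_inter_subcube [DecidableEq ι] {Q : Finset ι} {y : Input ι α} (hy : y ∈ subcube Q x) :
    subcube Q x ∩ subcube S y = subcube (Q ∪ S) y := by
  have hQ : subcube Q x = subcube Q y :=
    Set.ext fun z => forall₂_congr fun i hi => by rw [hy i hi]
  rw [hQ]
  exact Set.ext fun z => Finset.forall_mem_union.symm

/-! ### Computing a function by querying sets of indices -/

/-- Some decision tree of depth at most `d` computes `f` on those domain inputs that lie in `P`.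
Here `P` stands for what is known about the input before the tree is run. -/
def DecidesOn (f : PartialFn ι α) (P : Set (Input ι α)) (d : ℕ) : Prop :=
  ∃ T : DTree ι α (Option Bool), T.depth ≤ d ∧ ∀ x ∈ P, ∀ b, f x = some b → T.eval x = some b

lemma DecidesOn.mono (h : DecidesOn f P d) (hP : P' ⊆ P) (hd : d ≤ d') : DecidesOn f P' d' := by
  obtain ⟨T, hT, hTf⟩ := h
  exact ⟨T, hT.trans hd, fun x hx => hTf x (hP hx)⟩

lemma decidesOn_of_forall_eq_some {v : Option Bool} (h : ∀ x ∈ P, ∀ b, f x = some b → v = some b) :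
    DecidesOn f P d :=
  ⟨.leaf v, Nat.zero_le d, h⟩

lemma decidesOn_of_forall_ne_some {b : Bool} (h : ∀ x ∈ P, f x ≠ some !b) : DecidesOn f P d := by
  refine decidesOn_of_forall_eq_some (v := some b) fun x hx b' hb' => ?_
  have hne : b' ≠ !b := fun hbb' => h x hx (hbb' ▸ hb')
  rw [Bool.eq_not.not_left.1 hne]

lemma DecidesOn.query (i : ι) (h : ∀ v, DecidesOn f (P ∩ {x | x i = v}) d) :
    DecidesOn f P (d + 1) := by
  choose T hT hTf using h
  refine ⟨.node i T, ?_, fun x hx => hTf (x i) x ⟨hx, rfl⟩⟩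
  simpa [DTree.depth] using hT

lemma DecidesOn.query_finset (S : Finset ι) (h : ∀ x ∈ P, DecidesOn f (P ∩ subcube S x) d) :
    DecidesOn f P (d + S.card) := by
  classical
  induction S using Finset.induction_on generalizing P with
  | empty =>
    rcases P.eq_empty_or_nonempty with rfl | ⟨x, hx⟩
    · exact decidesOn_of_forall_eq_some (v := none) (by simp)
    · exact (h x hx).mono (fun y hy => ⟨hy, by simp [subcube]⟩) le_rfl
  | insert i S hi ih =>
    rw [Finset.card_insert_of_notMem hi, ← add_assoc]
    refine .query i fun v => ih ?_
    rintro x ⟨hx, rfl⟩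
    refine (h x hx).mono ?_ le_rfl
    rintro y ⟨⟨hy, hyi⟩, hyS⟩
    exact ⟨hy, (Finset.forall_mem_insert ..).2 ⟨hyi, hyS⟩⟩

lemma exists_decidesOn_univ [Finite ι] (f : PartialFn ι α) : ∃ d, DecidesOn f Set.univ d := by
  cases nonempty_fintype ι
  refine ⟨_, .query_finset (d := 0) Finset.univ fun x _ =>
    decidesOn_of_forall_eq_some (v := f x) ?_⟩
  rintro y ⟨-, hy⟩ b hb
  rwa [← show y = x from funext fun i => hy i (Finset.mem_univ i)]

lemma Dq_eq_sInf_decidesOn (f : PartialFn ι α) : Dq f = sInf {d | DecidesOn f Set.univ d} := by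
  simp [Dq, DecidesOn]

lemma decidesOn_univ_Dq [Finite ι] (f : PartialFn ι α) : DecidesOn f Set.univ (Dq f) :=
  Dq_eq_sInf_decidesOn f ▸ Nat.sInf_mem (exists_decidesOn_univ f)

/-! ### Certificates as sets of indices -/

/-- `S` is a certificate for `f` at `x`: revealing `x` on `S` forces the value `f x` on all domain
inputs. The partial assignment of a certificate is encoded by its set of fixed indices, as the
values are those of `x`. -/
def IsCertificate (f : PartialFn ι α) (S : Finset ι) (x : Input ι α) : Prop :=
  ∀ y ∈ subcube S x, f y = none ∨ f y = f x

/-- A certificate for `f` at `x` that, for `x` in the domain of `f`, also forces membership in the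
domain. -/
def IsDomainCertificate (f : PartialFn ι α) (S : Finset ι) (x : Input ι α) : Prop :=
  ∀ y ∈ subcube S x, f y = f x

lemma IsDomainCertificate.isCertificate (h : IsDomainCertificate f S x) : IsCertificate f S x :=
  fun y hy => .inr (h y hy)

lemma IsCertificate.exists_ne {S₀ S₁ : Finset ι} {x₀ x₁ : Input ι α} (h₀ : IsCertificate f S₀ x₀)
    (h₁ : IsDomainCertificate f S₁ x₁) (hx₁ : f x₁ ≠ none) (hne : f x₀ ≠ f x₁) :
    ∃ i ∈ S₀, i ∈ S₁ ∧ x₀ i ≠ x₁ i := by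
  classical
  by_contra! hagree
  let y : Input ι α := S₀.piecewise x₀ x₁
  have hy₀ : y ∈ subcube S₀ x₀ := fun i hi => S₀.piecewise_eq_of_mem _ _ hi
  have hy₁ : y ∈ subcube S₁ x₁ := fun i hi₁ => by
    by_cases hi₀ : i ∈ S₀
    · exact (hy₀ i hi₀).trans (hagree i hi₀ hi₁)
    · exact S₀.piecewise_eq_of_notMem _ _ hi₀
  rcases h₀ y hy₀ with hy | hy
  · exact hx₁ ((h₁ y hy₁).symm.trans hy)
  · exact hne (hy.symm.trans (h₁ y hy₁))

lemma IsCertificate.CxAt_le_card (h : IsCertificate f S x) : CxAt f x ≤ S.card := by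
  classical
  refine Nat.sInf_le ⟨fun i => if i ∈ S then some (x i) else none, ?_, fun y hy => ?_, ?_⟩
  · intro i v hv
    simpa using (Option.ite_none_right_eq_some.1 hv).2
  · exact h y fun i hi => hy i (x i) (if_pos hi)
  · simp [certSize, apply_ite]

lemma exists_isCertificate_card_le_CxAt [Finite ι] (f : PartialFn ι α) (x : Input ι α) :
    ∃ S, IsCertificate f S x ∧ S.card ≤ CxAt f x := by
  cases nonempty_fintype ι
  obtain ⟨ρ, hρx, hρf, hρ⟩ : CxAt f x ∈ {s | ∃ ρ, Consistent ρ x ∧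
      (∀ y, Consistent ρ y → f y = none ∨ f y = f x) ∧ certSize ρ ≤ s} :=
    Nat.sInf_mem ⟨_, fun i => some (x i), fun i v h => Option.some.inj h,
      fun y hy => .inr (congrArg f (funext fun i => hy i _ rfl)), le_rfl⟩
  refine ⟨Finset.univ.filter fun i => (ρ i).isSome, fun y hy => hρf y fun i v hv => ?_, ?_⟩
  · rw [hy i (by simp [hv]), hρx i v hv]
  · rwa [certSize, Nat.card_eq_fintype_card, Fintype.card_subtype] at hρ

lemma Cq_le {c : ℕ} (h : ∀ x, f x ≠ none → ∃ S, IsCertificate f S x ∧ S.card ≤ c) : Cq f ≤ c := by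
  refine csSup_le' ?_
  rintro _ ⟨x, hx, rfl⟩
  obtain ⟨S, hS, hSc⟩ := h x hx
  exact hS.CxAt_le_card.trans hSc

lemma bddAbove_CxAt [Finite ι] (f : PartialFn ι α) (p : Input ι α → Prop) :
    BddAbove {s | ∃ x, p x ∧ s = CxAt f x} :=
  (Set.finite_range (CxAt f)).bddAbove.mono <| by
    rintro _ ⟨x, -, rfl⟩
    exact Set.mem_range_self x

lemma CxAt_le_C1q [Finite ι] (hx : f x = some true) : CxAt f x ≤ C1q f :=
  le_csSup (bddAbove_CxAt f _) ⟨x, hx, rfl⟩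

lemma C1q_le_Cq [Finite ι] (f : PartialFn ι α) : C1q f ≤ Cq f :=
  csSup_le_csSup' (bddAbove_CxAt f _) fun _ ⟨x, hx, hs⟩ => ⟨x, by simp [hx], hs⟩

/-! ### Decision trees yield certificates -/

namespace DTree

variable {L : Type}

lemma cost_le_depth (T : DTree ι α L) (x : Input ι α) : T.cost x ≤ T.depth := by
  induction T with
  | leaf b => exact le_rfl
  | node i child ih =>
    exact Nat.succ_le_succ <| (ih (x i)).trans <|
      Finset.le_sup (f := fun a => (child a).depth) (Finset.mem_univ (x i))

lemma exists_finset_card_le_cost (T : DTree ι α L) (x : Input ι α) :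
    ∃ S : Finset ι, S.card ≤ T.cost x ∧ ∀ y ∈ subcube S x, T.eval y = T.eval x := by
  classical
  induction T with
  | leaf b => exact ⟨∅, le_rfl, fun _ _ => rfl⟩
  | node i child ih =>
    obtain ⟨S, hS, hSeval⟩ := ih (x i)
    refine ⟨insert i S, (Finset.card_insert_le i S).trans (Nat.succ_le_succ hS), fun y hy => ?_⟩
    obtain ⟨hyi, hyS⟩ := (Finset.forall_mem_insert ..).1 hy
    simpa only [eval, hyi] using hSeval y hyS

end DTree

lemma DecidesOn.exists_isCertificate (h : DecidesOn f Set.univ d) (hx : f x ≠ none) :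
    ∃ S, IsCertificate f S x ∧ S.card ≤ d := by
  obtain ⟨T, hT, hTf⟩ := h
  obtain ⟨S, hS, hSeval⟩ := T.exists_finset_card_le_cost x
  refine ⟨S, fun y hy => or_iff_not_imp_left.2 fun hfy => ?_,
    hS.trans ((T.cost_le_depth x).trans hT)⟩
  obtain ⟨b, hb⟩ := Option.ne_none_iff_exists'.1 hx
  obtain ⟨b', hb'⟩ := Option.ne_none_iff_exists'.1 hfy
  rw [hb, hb', ← hTf x trivial b hb, ← hTf y trivial b' hb', hSeval y hy]

lemma Cq_le_Dq [Finite ι] (f : PartialFn ι α) : Cq f ≤ Dq f :=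
  Cq_le fun _ hx => (decidesOn_univ_Dq f).exists_isCertificate hx

/-! ### Conflicting certificates yield decision trees -/

lemma card_sdiff_union_lt_of_conflict [DecidableEq ι] {Q S₀ S₁ : Finset ι} {x₀ x₁ : Input ι α}
    (hQ : x₀ ∈ subcube Q x₁) (hconflict : ∃ i ∈ S₀, i ∈ S₁ ∧ x₀ i ≠ x₁ i) :
    (S₀ \ (Q ∪ S₁)).card < (S₀ \ Q).card := by
  obtain ⟨i, hi₀, hi₁, hne⟩ := hconflict
  have hiQ : i ∉ Q := fun hi => hne (hQ i hi)
  refine Finset.card_lt_card ((Finset.ssubset_iff_of_subset ?_).2 ⟨i, ?_, ?_⟩)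
  · exact Finset.sdiff_subset_sdiff le_rfl Finset.subset_union_left
  · exact Finset.mem_sdiff.2 ⟨hi₀, hiQ⟩
  · simp [hi₁]

/-- The induction is on a bound `r` for the number of unqueried indices in the certificates of the
remaining 0-inputs, where `Q` is the set of indices queried so far. -/
lemma decidesOn_subcube_of_conflict [DecidableEq ι] {c r : ℕ} {S₀ S₁ : Input ι α → Finset ι}
    (hconflict : ∀ x₀ x₁, f x₀ = some false → f x₁ = some true →
      ∃ i ∈ S₀ x₀, i ∈ S₁ x₁ ∧ x₀ i ≠ x₁ i)
    (hS₁ : ∀ x₁, f x₁ = some true → (S₁ x₁).card ≤ c) (Q : Finset ι) (a : Input ι α)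
    (hS₀ : ∀ x₀ ∈ subcube Q a, f x₀ = some false → (S₀ x₀ \ Q).card ≤ r) :
    DecidesOn f (subcube Q a) (r * c) := by
  induction r using Nat.strong_induction_on generalizing Q a with | _ r ih
  by_cases hone : ∃ x₁ ∈ subcube Q a, f x₁ = some true
  swap
  · exact decidesOn_of_forall_ne_some (b := false) fun x hx hfx => hone ⟨x, hx, hfx⟩
  obtain ⟨x₁, hx₁, hfx₁⟩ := hone
  have hlt {x₀ : Input ι α} (hx₀ : x₀ ∈ subcube Q a) (hfx₀ : f x₀ = some false) :
      (S₀ x₀ \ (Q ∪ S₁ x₁)).card < r :=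
    (card_sdiff_union_lt_of_conflict (fun i hi => (hx₀ i hi).trans (hx₁ i hi).symm)
      (hconflict x₀ x₁ hfx₀ hfx₁)).trans_le (hS₀ x₀ hx₀ hfx₀)
  rcases r with _ | r
  · exact decidesOn_of_forall_ne_some (b := true) fun x hx hfx => Nat.not_lt_zero _ (hlt hx hfx)
  have hquery : DecidesOn f (subcube Q a) (r * c + (S₁ x₁).card) := by
    refine .query_finset (S₁ x₁) fun y hy => ?_
    have hsub := subcube_inter_subcube (S := S₁ x₁) hy
    rw [hsub]
    exact ih r r.lt_succ_self _ y fun x₀ hx₀ hfx₀ => Nat.le_of_lt_succ (hlt (hsub ▸ hx₀).1 hfx₀)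
  exact hquery.mono subset_rfl (r.succ_mul c ▸ Nat.add_le_add_left (hS₁ x₁ hfx₁) _)

lemma Dq_le_mul {c₀ c₁ : ℕ}
    (h₀ : ∀ x, f x = some false → ∃ S, IsCertificate f S x ∧ S.card ≤ c₀)
    (h₁ : ∀ x, f x = some true → ∃ S, IsDomainCertificate f S x ∧ S.card ≤ c₁) :
    Dq f ≤ c₀ * c₁ := by
  classical
  choose! S₀ hS₀ hc₀ using h₀
  choose! S₁ hS₁ hc₁ using h₁
  have hconflict (x₀ x₁ : Input ι α) (hx₀ : f x₀ = some false) (hx₁ : f x₁ = some true) :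
      ∃ i ∈ S₀ x₀, i ∈ S₁ x₁ ∧ x₀ i ≠ x₁ i :=
    (hS₀ x₀ hx₀).exists_ne (hS₁ x₁ hx₁) (by simp [hx₁]) (by simp [hx₀, hx₁])
  have hdecides (a : Input ι α) : DecidesOn f (subcube ∅ a) (c₀ * c₁) :=
    decidesOn_subcube_of_conflict hconflict hc₁ ∅ a fun x₀ _ hx₀ => by simpa using hc₀ x₀ hx₀
  rw [Dq_eq_sInf_decidesOn]
  exact Nat.sInf_le <| .query_finset ∅ fun a _ =>
    (hdecides a).mono Set.inter_subset_right le_rfl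

/-! ### Certifying functions -/

section Certifying

variable {k : ℕ} {hk : 0 < k} {φ : Input ι α → (Fin k → Fin 2) → Bool} {y : Fin k → Fin 2}

/-- The input `(x, y)` of a certifying function, as an input of the query function `certFn φ`. -/
def certInput (x : Input ι α) (y : Fin k → Fin 2) : Input (CertIdx ι k) (certAlphabet α k)
  | .inl i => x i
  | .inr q => y q

lemma certFn_certInput (φ : Input ι α → (Fin k → Fin 2) → Bool) (x : Input ι α)
    (y : Fin k → Fin 2) : certFn φ (certInput x y) = some (φ x y) :=
  rfl

lemma certInput_mem_subcube {T : Finset (CertIdx ι k)} {x' : Input ι α}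
    (hx' : x' ∈ subcube T.toLeft x) : certInput x' y ∈ subcube T (certInput x y) := by
  rintro (i | q) hi
  · exact hx' i (Finset.mem_toLeft.2 hi)
  · rfl

namespace IsCertifying

lemma eq_some_of_accept (h : IsCertifying hk f φ) (hφ : φ x y = true) :
    f x = some (decide (y ⟨0, hk⟩ = 1)) := by
  obtain ⟨hdom, hbit, -, -⟩ := h
  cases hfx : f x with
  | none => simp [hdom x y hfx] at hφ
  | some b =>
    have hy : y ⟨0, hk⟩ = if b then 1 else 0 := by
      by_contra hne
      simp [hbit x y b hfx hne] at hφ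
    cases b <;> simp [hy]

lemma isDomainCertificate_toLeft {T : Finset (CertIdx ι k)} (h : IsCertifying hk f φ)
    (hφ : φ x y = true) (hT : IsCertificate (certFn φ) T (certInput x y)) :
    IsDomainCertificate f T.toLeft x := by
  intro x' hx'
  have hφ' : φ x' y = true := by
    simpa [certFn_certInput, hφ] using hT _ (certInput_mem_subcube hx')
  rw [h.eq_some_of_accept hφ, h.eq_some_of_accept hφ']

lemma exists_isDomainCertificate [Finite ι] (h : IsCertifying hk f φ) (hx : f x ≠ none) :
    ∃ S, IsDomainCertificate f S x ∧ S.card ≤ C1q (certFn φ) := by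
  obtain ⟨b, hb⟩ := Option.ne_none_iff_exists'.1 hx
  obtain ⟨y, hφ⟩ := h.2.2.1 x b hb
  obtain ⟨T, hT, hTc⟩ := exists_isCertificate_card_le_CxAt (certFn φ) (certInput x y)
  have hone : certFn φ (certInput x y) = some true := by rw [certFn_certInput, hφ]
  exact ⟨T.toLeft, h.isDomainCertificate_toLeft hφ hT,
    Finset.card_toLeft_le.trans (hTc.trans (CxAt_le_C1q hone))⟩

lemma Cq_le_C1q [Finite ι] (h : IsCertifying hk f φ) : Cq f ≤ C1q (certFn φ) :=
  Cq_le fun _ hx => (h.exists_isDomainCertificate hx).imp fun _ hS => ⟨hS.1.isCertificate, hS.2⟩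

lemma Dq_le_C1q_sq [Finite ι] (h : IsCertifying hk f φ) : Dq f ≤ C1q (certFn φ) ^ 2 := by
  rw [sq]
  refine Dq_le_mul (fun x hx => ?_) fun x hx => h.exists_isDomainCertificate (by simp [hx])
  obtain ⟨S, hS, hSc⟩ := h.exists_isDomainCertificate (x := x) (by simp [hx])
  exact ⟨S, hS.isCertificate, hSc⟩

end IsCertifying

end Certifying

end QC

theorem certifying_function_complexity_bounds_general {ι : Type} [Finite ι] {α : ι → ℕ} {k : ℕ}
    {hk : 0 < k} {f : QC.PartialFn ι α} {φ : QC.Input ι α → (Fin k → Fin 2) → Bool}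
    (h : QC.IsCertifying hk f φ) :
    QC.Dq f ≤ QC.C1q (QC.certFn φ) ^ 2 ∧
    QC.Cq f ≤ QC.C1q (QC.certFn φ) ∧
    QC.Dq f ≤ QC.Dq (QC.certFn φ) ^ 2 ∧
    QC.Cq f ≤ QC.Cq (QC.certFn φ) := by
  have hC : QC.C1q (QC.certFn φ) ≤ QC.Cq (QC.certFn φ) := QC.C1q_le_Cq _
  have hD : QC.C1q (QC.certFn φ) ≤ QC.Dq (QC.certFn φ) := hC.trans (QC.Cq_le_Dq _)
  exact ⟨h.Dq_le_C1q_sq, h.Cq_le_C1q, h.Dq_le_C1q_sq.trans (Nat.pow_le_pow_left hD 2),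
    h.Cq_le_C1q.trans hC⟩

/-- If `φ` is a certifying function for `f`, then
`D(f) ≤ C¹(φ)²`, `C(f) ≤ C¹(φ)`, and consequently `D(f) ≤ D(φ)²`, `C(f) ≤ C(φ)`. -/
theorem certifying_function_complexity_bounds :
    ∀ (n M k : ℕ) (hk : 0 < k)
      (f : QC.PartialFn (Fin n) fun _ => M)
      (φ : QC.Input (Fin n) (fun _ => M) → (Fin k → Fin 2) → Bool),
      QC.IsCertifying hk f φ →
      QC.Dq f ≤ QC.C1q (QC.certFn φ) ^ 2 ∧
      QC.Cq f ≤ QC.C1q (QC.certFn φ) ∧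
      QC.Dq f ≤ QC.Dq (QC.certFn φ) ^ 2 ∧
      QC.Cq f ≤ QC.Cq (QC.certFn φ) :=
  fun _ _ _ _ _ _ h => certifying_function_complexity_bounds_general h
end
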